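/- Let 1 < p_0 ≤ q_0 < ∞ and assume sup_{j≥0} 2^{jd/q_0} ‖𝒜_j‖_{L^{p_0}→L^{q_0}(L^{p_0})} ≤ C_0 < ∞. Let q_0 < q < ∞ and define ρ_min(q) and ρ_max(q) by 1/ρ_min(q) = 1 − (q_0/q)(1 − 1/p_0) and 1/ρ_max(q) = (q_0/q)(1/p_0). Assume ρ_min(q) < p ≤ q, and that r ≤ p if ρ_min(q) < p < ρ_max(q), while r < ρ_max(q) if ρ_max(q) ≤ p ≤ q. Then there is a constant C(p,q) such that for every sequence {f_j}_{j≥0}, ‖ Σ_{j≥0} ‖𝒜_j f_j‖_{L^r(ℝ)} ‖_{L^q(ℝ^d)} ≤ C(p,q)(1 + C_0) (Σ_{j≥0} 2^{−jd} ‖f_j‖_{L^p}^q)^{1/q}. -/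

import Mathlib

open MeasureTheory Metric Set
open scoped ENNReal NNReal FourierTransform

noncomputable section

/-- Euclidean `d`-space. -/
abbrev Euc (d : ℕ) : Type := EuclideanSpace ℝ (Fin d)

/-- The normalized surface measure `σ` on the unit sphere `S^{d-1} ⊆ ℝ^d`. -/
def sphereMeasure (d : ℕ) : Measure (Euc d) :=
  (((volume : Measure (Euc d)).toSphere Set.univ)⁻¹ : ℝ≥0∞) •
    ((volume : Measure (Euc d)).toSphere.map Subtype.val)

/-- The spherical average `A_t f(x) = ∫_{S^{d-1}} f(x - t y) dσ(y)`. -/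
def sphAvg {d : ℕ} (f : Euc d → ℂ) (t : ℝ) (x : Euc d) : ℂ :=
  ∫ y, f (x - t • y) ∂(sphereMeasure d)

/-- The dyadic symbols `β_j` built from the bump `β₀`:
`β_j(s) = β₀(2^{-j} s) - β₀(2^{1-j} s)` for `j ≥ 1`. -/
def betaJ (β₀ : ℝ → ℝ) : ℕ → ℝ → ℝ
  | 0 => β₀
  | (j + 1) => fun s => β₀ ((2 : ℝ) ^ (-(j + 1 : ℤ)) * s) - β₀ ((2 : ℝ) ^ (-(j : ℤ)) * s)

/-- The frequency localization `L_j` with symbol `β_j(|ξ|)`. -/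
def freqLoc (d : ℕ) (β₀ : ℝ → ℝ) (j : ℕ) (f : Euc d → ℂ) : Euc d → ℂ :=
  𝓕⁻ (fun ξ => (betaJ β₀ j ‖ξ‖ : ℂ) * 𝓕 f ξ)

/-- `χ` is an admissible time cutoff: smooth, `χ = 1` on a neighborhood of `[1,2]`,
supported in `[1/2,4]`. -/
def IsCutoff (χ : ℝ → ℝ) : Prop :=
  ContDiff ℝ (⊤ : ℕ∞) χ ∧ (∃ U : Set ℝ, IsOpen U ∧ Set.Icc 1 2 ⊆ U ∧ Set.EqOn χ 1 U) ∧
    Function.support χ ⊆ Set.Icc (1 / 2 : ℝ) 4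

/-- `β₀` is an admissible frequency bump: smooth, `β₀(s) = 1` for `|s| < 1/2` and
`β₀(s) = 0` for `|s| > 1`. -/
def IsBump (β₀ : ℝ → ℝ) : Prop :=
  ContDiff ℝ (⊤ : ℕ∞) β₀ ∧ (∀ s : ℝ, |s| < 1 / 2 → β₀ s = 1) ∧ ∀ s : ℝ, 1 < |s| → β₀ s = 0

/-- The frequency-localized operator `𝒜_j f(x,t) = χ(t) A_t L_j f(x)`. -/
def Aj (d : ℕ) (χ β₀ : ℝ → ℝ) (j : ℕ) (f : Euc d → ℂ) (x : Euc d) (t : ℝ) : ℂ :=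
  (χ t : ℂ) * sphAvg (freqLoc d β₀ j f) t x

/-- `L^q` norm (with respect to `μ`) of an `ℝ≥0∞`-valued function, `1 ≤ q ≤ ∞`. -/
def lqNorm {α : Type*} [MeasurableSpace α] (q : ℝ≥0∞) (g : α → ℝ≥0∞)
    (μ : Measure α) : ℝ≥0∞ :=
  if q = ∞ then essSup g μ else (∫⁻ x, g x ^ q.toReal ∂μ) ^ (1 / q.toReal)

/-- The mixed norm `‖F‖_{L^q(L^r)}` of `F : ℝ^d × ℝ → ℂ`. -/
def mixedNorm (d : ℕ) (q r : ℝ≥0∞) (F : Euc d → ℝ → ℂ) : ℝ≥0∞ :=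
  lqNorm q (fun x => lqNorm r (fun t => (‖F x t‖₊ : ℝ≥0∞)) volume) volume

/-- The operator norm `‖𝒜_j‖_{L^p → L^q(L^r)}`. -/
def AjOpNorm (d : ℕ) (χ β₀ : ℝ → ℝ) (j : ℕ) (p q r : ℝ≥0∞) : ℝ≥0∞ :=
  ⨆ (f : Euc d → ℂ) (_ : eLpNorm f p volume ≤ 1), mixedNorm d q r (Aj d χ β₀ j f)

/-!
Two ingredients make the sum over scales converge without loss. Pointwise in `x`, the `L^ρ(dt)`
norm of `𝒜_j f` is bounded by `‖f‖_ρ` uniformly in `j`. Interpolating the hypothesis with the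
`L^1` bound, by decomposing `f` into dyadic level pieces, gives `L^ρ → L^{q₁}(L^ρ)` bounds for
some `q₁ < q`, with the factor `2^{-jd}`. At a point `x`, the uniform bound replaces the terms
by a geometric majorant up to the scale where that majorant exceeds the size of the sum, and the
`L^{q₁}` bound controls the remaining scales; this yields the claim for `p = r = ρ`, for every
`ρ` strictly between `ρ_min` and `ρ_max`.

The kernel of `𝒜_j` is `O(2^{-jd} (1 + |x - w|)^{-2d})` away from a fixed neighborhood of the
diagonal. Localizing to balls and applying Hölder's inequality there therefore raises the input
exponent from `ρ` to `p`, and Hölder's inequality in the compactly supported variable `t` lowers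
the output exponent from `ρ` to `r`.
-/

lemma two_rpow_add (x y : ℝ) : (2 : ℝ≥0∞) ^ (x + y) = 2 ^ x * 2 ^ y :=
  ENNReal.rpow_add _ _ (by norm_num) (by norm_num)

lemma two_rpow_ne_top (x : ℝ) : (2 : ℝ≥0∞) ^ x ≠ ∞ := by
  simp [ENNReal.rpow_eq_top_iff]

lemma ofReal_two_zpow (k : ℤ) : ENNReal.ofReal ((2 : ℝ) ^ k) = 2 ^ (k : ℝ) := by
  rw [← Real.rpow_intCast, ← ENNReal.ofReal_rpow_of_pos (by norm_num)]
  simp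

lemma mul_inv_one_sub_add_one {θ : ℝ≥0∞} (hθ : θ < 1) :
    θ * (1 - θ)⁻¹ + 1 = (1 - θ)⁻¹ := by
  have hne : 1 - θ ≠ 0 := (tsub_pos_of_lt hθ).ne'
  have hfin : 1 - θ ≠ ∞ := ENNReal.sub_ne_top ENNReal.one_ne_top
  calc θ * (1 - θ)⁻¹ + 1 = (θ + (1 - θ)) * (1 - θ)⁻¹ := by
        rw [add_mul, ENNReal.mul_inv_cancel hne hfin]
    _ = (1 - θ)⁻¹ := by rw [add_tsub_cancel_of_le hθ.le, one_mul]

section Minkowski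

variable {α ι : Type*} [MeasurableSpace α] {μ : Measure α} {q : ℝ}

lemma lintegral_rpow_finset_sum_le (hq : 1 ≤ q) {G : ι → α → ℝ≥0∞} (hG : ∀ k, Measurable (G k))
    (s : Finset ι) :
    (∫⁻ x, (∑ k ∈ s, G k x) ^ q ∂μ) ^ (1 / q) ≤ ∑ k ∈ s, (∫⁻ x, G k x ^ q ∂μ) ^ (1 / q) := by
  classical
  have hq0 : 0 < q := by linarith
  induction s using Finset.induction_on with
  | empty => simp [ENNReal.zero_rpow_of_pos hq0, hq0]
  | insert i s hi ih =>
    simp_rw [Finset.sum_insert hi]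
    exact (ENNReal.lintegral_Lp_add_le (hG i).aemeasurable
      (Finset.measurable_fun_sum s fun k _ ↦ hG k).aemeasurable hq).trans (by gcongr)

lemma lintegral_rpow_tsum_le [Countable ι] (hq : 1 ≤ q) {G : ι → α → ℝ≥0∞}
    (hG : ∀ k, Measurable (G k)) :
    (∫⁻ x, (∑' k, G k x) ^ q ∂μ) ^ (1 / q) ≤ ∑' k, (∫⁻ x, G k x ^ q ∂μ) ^ (1 / q) := by
  classical
  have hq0 : 0 < q := by linarith
  have hsup (x : α) : (∑' k, G k x) ^ q = ⨆ s : Finset ι, (∑ k ∈ s, G k x) ^ q := by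
    rw [ENNReal.tsum_eq_iSup_sum]
    exact (ENNReal.orderIsoRpow q hq0).map_iSup _
  have hdir : Directed (· ≤ ·) fun (s : Finset ι) x ↦ (∑ k ∈ s, G k x) ^ q :=
    Monotone.directed_le fun s t hst x ↦
      ENNReal.rpow_le_rpow (Finset.sum_le_sum_of_subset hst) hq0.le
  simp_rw [hsup]
  rw [lintegral_iSup_directed (fun s ↦
    ((Finset.measurable_fun_sum s fun k _ ↦ hG k).pow_const q).aemeasurable) hdir, one_div,
    ENNReal.rpow_inv_le_iff hq0]
  refine iSup_le fun s ↦ ?_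
  rw [← ENNReal.rpow_inv_le_iff hq0, ← one_div]
  exact (lintegral_rpow_finset_sum_le hq hG s).trans (ENNReal.sum_le_tsum _)

end Minkowski

section GeometricConvolution

/-- The convolution `n ↦ ∑_{i ≤ n} θ^{n-i} c_i` of a sequence with a geometric progression, written
as a recursion. It serves both as a fast growing majorant of partial sums (`1 ≤ θ`) and as an
averaging operator bounded on `ℓ^q` (`θ < 1`). -/
def geomConv (θ : ℝ≥0∞) (c : ℕ → ℝ≥0∞) : ℕ → ℝ≥0∞
  | 0 => c 0
  | n + 1 => θ * geomConv θ c n + c (n + 1)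

variable {θ : ℝ≥0∞} {c : ℕ → ℝ≥0∞}

lemma le_geomConv (n : ℕ) : c n ≤ geomConv θ c n := by
  cases n with
  | zero => exact le_rfl
  | succ n => exact le_add_self

lemma sum_range_le_geomConv (hθ : 1 ≤ θ) (n : ℕ) :
    ∑ i ∈ Finset.range (n + 1), c i ≤ geomConv θ c n := by
  induction n with
  | zero => simp [geomConv]
  | succ n ih =>
    rw [Finset.sum_range_succ, geomConv]
    gcongr
    exact ih.trans (le_mul_of_one_le_left' hθ)

lemma pow_mul_geomConv (a : ℝ≥0∞) (n : ℕ) :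
    a ^ n * geomConv θ c n = geomConv (a * θ) (fun i ↦ a ^ i * c i) n := by
  induction n with
  | zero => rfl
  | succ n ih => simp only [geomConv, ← ih]; ring

lemma sum_range_geomConv_rpow_le (hθ : θ < 1) {q : ℝ} (hq : 1 ≤ q) (N : ℕ) :
    (∑ n ∈ Finset.range N, geomConv θ c n ^ q) ^ (1 / q) ≤
      (1 - θ)⁻¹ * (∑' n, c n ^ q) ^ (1 / q) := by
  have hq0 : 0 < q := by linarith
  induction N with
  | zero => simp [hq0]
  | succ N ih =>
    set shifted : ℕ → ℝ≥0∞ := fun n ↦ n.casesOn 0 fun k ↦ θ * geomConv θ c k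
    have hsplit : geomConv θ c = fun n ↦ shifted n + c n := by
      funext n
      cases n <;> simp [shifted, geomConv]
    have hshift : (∑ n ∈ Finset.range (N + 1), shifted n ^ q) ^ (1 / q) =
        θ * (∑ n ∈ Finset.range N, geomConv θ c n ^ q) ^ (1 / q) := by
      have hzero : shifted 0 ^ q = 0 := ENNReal.zero_rpow_of_pos hq0
      rw [Finset.sum_range_succ', hzero, add_zero]
      simp only [shifted, ENNReal.mul_rpow_of_nonneg _ _ hq0.le, ← Finset.mul_sum]
      rw [ENNReal.mul_rpow_of_nonneg _ _ (by positivity), ← ENNReal.rpow_mul,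
        mul_one_div_cancel hq0.ne', ENNReal.rpow_one]
    calc (∑ n ∈ Finset.range (N + 1), geomConv θ c n ^ q) ^ (1 / q)
      _ ≤ (∑ n ∈ Finset.range (N + 1), shifted n ^ q) ^ (1 / q) +
          (∑ n ∈ Finset.range (N + 1), c n ^ q) ^ (1 / q) := by
        rw [hsplit]
        exact ENNReal.Lp_add_le _ _ _ hq
      _ ≤ θ * ((1 - θ)⁻¹ * (∑' n, c n ^ q) ^ (1 / q)) + (∑' n, c n ^ q) ^ (1 / q) := by
        rw [hshift]
        gcongr
        exact ENNReal.sum_le_tsum _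
      _ = (1 - θ)⁻¹ * (∑' n, c n ^ q) ^ (1 / q) := by
        rw [← mul_assoc, ← add_one_mul, mul_inv_one_sub_add_one hθ]

lemma tsum_geomConv_rpow_le (hθ : θ < 1) {q : ℝ} (hq : 1 ≤ q) :
    ∑' n, geomConv θ c n ^ q ≤ (1 - θ)⁻¹ ^ q * ∑' n, c n ^ q := by
  have hq0 : 0 < q := by linarith
  refine ENNReal.tsum_le_of_sum_range_le fun N ↦ ?_
  have h := ENNReal.rpow_le_rpow (sum_range_geomConv_rpow_le (c := c) hθ hq N) hq0.le
  simpa only [ENNReal.mul_rpow_of_nonneg _ _ hq0.le, ← ENNReal.rpow_mul,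
    one_div_mul_cancel hq0.ne', ENNReal.rpow_one] using h

end GeometricConvolution

section Pigeonhole

variable {a s : ℝ} {lam T : ℝ≥0∞} {c D : ℕ → ℝ≥0∞}

lemma pow_mul_le_of_mul_le_succ (hD : ∀ n, lam * D n ≤ D (n + 1)) (n m : ℕ) :
    lam ^ m * D n ≤ D (n + m) := by
  induction m with
  | zero => simp
  | succ m ih =>
    calc lam ^ (m + 1) * D n = lam * (lam ^ m * D n) := by ring
      _ ≤ lam * D (n + m) := by gcongr
      _ ≤ D (n + (m + 1)) := hD _

lemma le_pow_mul_of_rpow_mul_le (ha : 0 < a) (hs : 0 < s) (hlam : lam ≠ 0) (hlam' : lam ≠ ∞)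
    (hT : T ≠ ∞) {x y : ℝ≥0∞} {m : ℕ} (hy : lam ^ m * T ≤ y) (hTy : T < y)
    (hxy : x ^ a * y ^ s ≤ T ^ (a + s)) : x ≤ (lam ^ (-(s / a))) ^ m * T := by
  rcases eq_or_ne T 0 with rfl | hT0
  · have hys : y ^ s ≠ 0 := (ENNReal.rpow_pos_of_nonneg hTy hs.le).ne'
    rw [ENNReal.zero_rpow_of_pos (by positivity), nonpos_iff_eq_zero, mul_eq_zero,
      or_iff_left hys, ENNReal.rpow_eq_zero_iff_of_pos ha] at hxy
    simp [hxy]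
  have hcancel : x ^ a * (lam ^ m) ^ s ≤ T ^ a := by
    refine (ENNReal.mul_le_mul_iff_left (ENNReal.rpow_pos hT0.bot_lt hT).ne'
      (ENNReal.rpow_ne_top_of_nonneg hs.le hT)).1 ?_
    calc x ^ a * (lam ^ m) ^ s * T ^ s = x ^ a * (lam ^ m * T) ^ s := by
          rw [ENNReal.mul_rpow_of_nonneg _ _ hs.le, mul_assoc]
      _ ≤ x ^ a * y ^ s := by gcongr
      _ ≤ T ^ a * T ^ s := by rwa [← ENNReal.rpow_add_of_nonneg _ _ ha.le hs.le]
  have hweight : ((lam ^ (-(s / a))) ^ m) ^ a = ((lam ^ m) ^ s)⁻¹ := by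
    rw [← ENNReal.rpow_natCast, ← ENNReal.rpow_natCast, ← ENNReal.rpow_mul, ← ENNReal.rpow_mul,
      ← ENNReal.rpow_mul, ← ENNReal.rpow_neg]
    congr 1
    field_simp
  rw [← ENNReal.rpow_le_rpow_iff ha, ENNReal.mul_rpow_of_nonneg _ _ ha.le, hweight, mul_comm,
    ← div_eq_mul_inv]
  exact ENNReal.le_div_iff_mul_le
    (.inl (ENNReal.rpow_pos (pow_ne_zero m hlam).bot_lt (by finiteness)).ne')
    (.inl (by finiteness)) |>.2 hcancel

/-- The terms with `D n ≤ T` are summed by `D n` itself; on the remaining ones `D n` grows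
geometrically, so the product bound makes `c n` decay geometrically. -/
lemma sum_range_le_of_rpow_mul_le (ha : 0 < a) (hs : 0 < s) (hlam : 1 ≤ lam) (hlam' : lam ≠ ∞)
    (hcD : ∀ n, ∑ i ∈ Finset.range (n + 1), c i ≤ D n) (hD : ∀ n, lam * D n ≤ D (n + 1))
    (hT : T ≠ ∞) (hcT : ∀ n, c n ^ a * D n ^ s ≤ T ^ (a + s)) (N : ℕ) :
    ∑ i ∈ Finset.range N, c i ≤ (1 + (1 - lam ^ (-(s / a)))⁻¹) * T := by
  classical
  by_cases hex : ∃ n, T < D n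
  · set n₀ := Nat.find hex
    have hn₀ : T < D n₀ := Nat.find_spec hex
    have hhead : ∑ i ∈ Finset.range n₀, c i ≤ T := by
      rcases hk : n₀ with _ | k
      · simp
      · exact (hcD k).trans (not_lt.1 (Nat.find_min hex (by omega)))
    have hgrow (m : ℕ) : lam ^ m * T ≤ D (n₀ + m) :=
      (by gcongr : lam ^ m * T ≤ lam ^ m * D n₀).trans (pow_mul_le_of_mul_le_succ hD n₀ m)
    have hdecay (m : ℕ) : c (n₀ + m) ≤ (lam ^ (-(s / a))) ^ m * T := by
      refine le_pow_mul_of_rpow_mul_le ha hs (by positivity) hlam' hT (hgrow m)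
        (hn₀.trans_le ?_) (hcT _)
      exact (le_mul_of_one_le_left' (one_le_pow₀ hlam)).trans
        (pow_mul_le_of_mul_le_succ hD n₀ m)
    calc ∑ i ∈ Finset.range N, c i ≤ ∑ i ∈ Finset.range (n₀ + N), c i :=
          Finset.sum_le_sum_of_subset (Finset.range_mono (by omega))
      _ = ∑ i ∈ Finset.range n₀, c i + ∑ m ∈ Finset.range N, c (n₀ + m) :=
          Finset.sum_range_add _ _ _
      _ ≤ T + ∑ m ∈ Finset.range N, (lam ^ (-(s / a))) ^ m * T := by gcongr; exact hdecay _
      _ ≤ T + (1 - lam ^ (-(s / a)))⁻¹ * T := by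
          rw [← Finset.sum_mul, ← ENNReal.tsum_geometric]
          gcongr
          exact ENNReal.sum_le_tsum _
      _ = _ := by ring
  · push Not at hex
    calc ∑ i ∈ Finset.range N, c i ≤ ∑ i ∈ Finset.range (N + 1), c i :=
          Finset.sum_le_sum_of_subset (Finset.range_mono (by omega))
      _ ≤ T := (hcD N).trans (hex N)
      _ ≤ _ := le_mul_of_one_le_left' le_self_add

theorem exists_tsum_rpow_le_tsum_rpow_mul_rpow (ha : 0 < a) (hs : 0 < s) (hlam : 1 < lam)
    (hlam' : lam ≠ ∞) : ∃ K : ℝ≥0, ∀ c D : ℕ → ℝ≥0∞,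
      (∀ n, ∑ i ∈ Finset.range (n + 1), c i ≤ D n) → (∀ n, lam * D n ≤ D (n + 1)) →
        (∑' n, c n) ^ (a + s) ≤ K * ∑' n, c n ^ a * D n ^ s := by
  have hθ : lam ^ (-(s / a)) < 1 := ENNReal.rpow_lt_one_of_one_lt_of_neg hlam (by
    rw [neg_lt_zero]; positivity)
  have hfin : 1 + (1 - lam ^ (-(s / a)))⁻¹ ≠ ∞ := by
    simpa using (tsub_pos_of_lt hθ).ne'
  lift 1 + (1 - lam ^ (-(s / a)))⁻¹ to ℝ≥0 using hfin with K hK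
  have hK1 : 1 ≤ K := by rw [← ENNReal.one_le_coe_iff, hK]; exact le_self_add
  have has : 0 < a + s := by positivity
  refine ⟨K ^ (a + s), fun c D hcD hD ↦ ?_⟩
  set U := ∑' n, c n ^ a * D n ^ s
  rcases eq_or_ne U ∞ with hUtop | hUtop
  · rw [hUtop, ENNReal.mul_top (by exact_mod_cast (NNReal.rpow_pos (by positivity)).ne')]
    exact le_top
  have hterm (n : ℕ) : c n ^ a * D n ^ s ≤ (U ^ (a + s)⁻¹) ^ (a + s) := by
    rw [ENNReal.rpow_inv_rpow has.ne']
    exact ENNReal.le_tsum n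
  have hsum : ∑' n, c n ≤ K * U ^ (a + s)⁻¹ := by
    rw [hK]
    exact ENNReal.tsum_le_of_sum_range_le (sum_range_le_of_rpow_mul_le ha hs hlam.le hlam' hcD hD
      (by finiteness) hterm)
  calc (∑' n, c n) ^ (a + s) ≤ (K * U ^ (a + s)⁻¹) ^ (a + s) := by gcongr
    _ = (K ^ (a + s) : ℝ≥0) * U := by
      rw [ENNReal.mul_rpow_of_nonneg _ _ has.le, ENNReal.rpow_inv_rpow has.ne',
        ENNReal.coe_rpow_of_nonneg _ has.le]

lemma tsum_int_le_of_forall_tsum_nat_sub_le {c : ℤ → ℝ≥0∞} {B : ℝ≥0∞}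
    (h : ∀ M : ℕ, ∑' n : ℕ, c (n - M) ≤ B) : ∑' k, c k ≤ B := by
  classical
  rw [ENNReal.tsum_eq_iSup_sum]
  refine iSup_le fun s ↦ ?_
  obtain ⟨l, hl⟩ := s.bddBelow
  have hmem (k : ℤ) (hk : k ∈ s) : -(l.natAbs : ℤ) ≤ k := by
    have := hl hk
    omega
  calc ∑ k ∈ s, c k
      = ∑ n ∈ s.image fun k : ℤ ↦ (k + l.natAbs).toNat, c (n - l.natAbs) := by
        rw [Finset.sum_image]
        · refine Finset.sum_congr rfl fun k hk ↦ ?_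
          have := hmem k hk
          congr 1
          omega
        · intro x hx y hy hxy
          have := hmem x hx
          have := hmem y hy
          dsimp only at hxy
          omega
    _ ≤ ∑' n : ℕ, c (n - l.natAbs) := ENNReal.sum_le_tsum _
    _ ≤ B := h _

lemma sum_range_two_rpow_le (x : ℝ) (n : ℕ) :
    ∑ i ∈ Finset.range (n + 1), (2 : ℝ≥0∞) ^ (i + x) ≤ 2 ^ (n + x + 1) := by
  induction n with
  | zero => simpa using ENNReal.rpow_le_rpow_of_exponent_le one_le_two (by linarith)
  | succ n ih =>
    rw [Finset.sum_range_succ]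
    calc _ ≤ (2 : ℝ≥0∞) ^ (n + x + 1) + 2 ^ (n + x + 1) := by
          exact add_le_add ih (ENNReal.rpow_le_rpow_of_exponent_le one_le_two
            (by push_cast; linarith))
      _ = _ := by
          rw [← mul_two, show ((n + 1 : ℕ) : ℝ) + x + 1 = (n + x + 1) + 1 by push_cast; ring,
            two_rpow_add (n + x + 1), ENNReal.rpow_one]

theorem exists_tsum_rpow_le_tsum_rpow_mul_two_rpow (ha : 0 < a) (hs : 0 < s) (A : ℝ≥0) :
    ∃ K : ℝ≥0, ∀ c : ℤ → ℝ≥0∞, (∀ k : ℤ, c k ≤ A * 2 ^ ((k : ℝ) + 1)) →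
      (∑' k, c k) ^ (a + s) ≤ K * ∑' k : ℤ, c k ^ a * 2 ^ ((k : ℝ) * s) := by
  obtain ⟨K, hK⟩ := exists_tsum_rpow_le_tsum_rpow_mul_rpow ha hs ENNReal.one_lt_two (by simp)
  have has : 0 < a + s := by positivity
  refine ⟨K * (4 * A) ^ s, fun c hc ↦ ?_⟩
  rw [← ENNReal.le_rpow_inv_iff has]
  refine tsum_int_le_of_forall_tsum_nat_sub_le fun M ↦ ?_
  rw [ENNReal.le_rpow_inv_iff has]
  set D : ℕ → ℝ≥0∞ := fun n ↦ A * 2 ^ ((n : ℝ) + (1 - M) + 1)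
  have hcD (n : ℕ) : ∑ i ∈ Finset.range (n + 1), c (i - M) ≤ D n := by
    calc _ ≤ ∑ i ∈ Finset.range (n + 1), A * (2 : ℝ≥0∞) ^ ((i : ℝ) + (1 - M)) := by
          refine Finset.sum_le_sum fun i _ ↦ (hc _).trans_eq ?_
          congr 2
          push_cast
          ring
      _ ≤ D n := by
          rw [← Finset.mul_sum]
          exact mul_le_mul_right (sum_range_two_rpow_le _ n) _
  have hDgrow (n : ℕ) : 2 * D n ≤ D (n + 1) := by
    simp only [D]
    rw [show ((n + 1 : ℕ) : ℝ) + (1 - M) + 1 = 1 + (n + (1 - M) + 1) by push_cast; ring,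
      two_rpow_add 1, ENNReal.rpow_one, mul_left_comm]
  have hDrpow (n : ℕ) : D n ^ s = ((4 * A) ^ s : ℝ≥0) * 2 ^ (((n - M : ℤ) : ℝ) * s) := by
    have hfour : D n = (4 * A : ℝ≥0) * 2 ^ ((n - M : ℤ) : ℝ) := by
      simp only [D]
      rw [show (n : ℝ) + (1 - M) + 1 = ((1 : ℝ) + 1) + (n - M : ℤ) by push_cast; ring,
        two_rpow_add, two_rpow_add, ENNReal.rpow_one]
      push_cast
      ring
    rw [hfour, ENNReal.mul_rpow_of_nonneg _ _ hs.le, ENNReal.coe_rpow_of_nonneg _ hs.le,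
      ENNReal.rpow_mul]
  calc (∑' n : ℕ, c (n - M)) ^ (a + s) ≤ K * ∑' n : ℕ, c (n - M) ^ a * D n ^ s :=
        hK _ D hcD hDgrow
    _ = (K * (4 * A) ^ s : ℝ≥0) * ∑' n : ℕ, c (n - M) ^ a * 2 ^ (((n - M : ℤ) : ℝ) * s) := by
        simp_rw [hDrpow, mul_left_comm _ (((4 * A) ^ s : ℝ≥0) : ℝ≥0∞), ENNReal.tsum_mul_left]
        rw [ENNReal.coe_mul, mul_assoc]
    _ ≤ _ := by
        gcongr
        exact ENNReal.tsum_comp_le_tsum_of_injective (f := fun n : ℕ ↦ (n : ℤ) - M)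
          (fun x y hxy ↦ by simpa using hxy) fun k : ℤ ↦ c k ^ a * 2 ^ ((k : ℝ) * s)

end Pigeonhole

section ScaleSummation

variable {X : Type*} [MeasurableSpace X] {μ : Measure X} {q q₁ d : ℝ}

lemma two_rpow_lt_one {x : ℝ} (hx : x < 0) : (2 : ℝ≥0∞) ^ x < 1 :=
  ENNReal.rpow_lt_one_of_one_lt_of_neg ENNReal.one_lt_two hx

lemma two_rpow_pow_rpow (hq : q ≠ 0) (d : ℝ) (n : ℕ) :
    (((2 : ℝ≥0∞) ^ (-(d / q))) ^ n) ^ q = 2 ^ (-(n * d)) := by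
  rw [← ENNReal.rpow_natCast, ← ENNReal.rpow_mul, ← ENNReal.rpow_mul]
  congr 1
  field_simp

lemma exists_tsum_two_rpow_mul_geomConv_rpow_le (hq : 1 ≤ q) (hd : 0 < d) :
    ∃ K : ℝ≥0, ∀ b : ℕ → ℝ≥0∞,
      ∑' n : ℕ, 2 ^ (-(n * d)) * geomConv (2 ^ (d / (2 * q))) b n ^ q ≤
        K * ∑' n : ℕ, 2 ^ (-(n * d)) * b n ^ q := by
  have hq0 : 0 < q := by linarith
  have hratio : (2 : ℝ≥0∞) ^ (-(d / q)) * 2 ^ (d / (2 * q)) = 2 ^ (-(d / (2 * q))) := by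
    rw [← two_rpow_add]
    congr 1
    field_simp
    ring
  have hlt : (2 : ℝ≥0∞) ^ (-(d / (2 * q))) < 1 := two_rpow_lt_one (by
    rw [neg_lt_zero]; positivity)
  have hfin : (1 - (2 : ℝ≥0∞) ^ (-(d / (2 * q))))⁻¹ ≠ ∞ := by
    simpa using (tsub_pos_of_lt hlt).ne'
  refine ⟨((1 - (2 : ℝ≥0∞) ^ (-(d / (2 * q))))⁻¹ ^ q).toNNReal, fun b ↦ ?_⟩
  rw [ENNReal.coe_toNNReal (by finiteness)]
  simp_rw [← two_rpow_pow_rpow hq0.ne' d, ← ENNReal.mul_rpow_of_nonneg _ _ hq0.le,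
    pow_mul_geomConv, hratio]
  exact tsum_geomConv_rpow_le hlt hq

/-- The pointwise bound `u j ≤ M b_j` controls the partial sums of `∑ u j` by a geometric majorant
`D`, so the pigeonhole principle trades the power `q - q₁` of the sum for a power of `D`. -/
theorem exists_lintegral_tsum_rpow_le (hq₁ : 0 < q₁) (hq₁q : q₁ < q) (hq : 1 ≤ q) (hd : 0 < d)
    (M : ℝ≥0) : ∃ K : ℝ≥0, ∀ (N : ℝ≥0∞) (u : ℕ → X → ℝ≥0∞) (b : ℕ → ℝ≥0∞),
      (∀ j, Measurable (u j)) → (∀ j x, u j x ≤ M * b j) →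
      (∀ j : ℕ, ∫⁻ x, u j x ^ q₁ ∂μ ≤ N * 2 ^ (-(j * d)) * b j ^ q₁) →
        ∫⁻ x, (∑' j, u j x) ^ q ∂μ ≤ K * N * ∑' j : ℕ, 2 ^ (-(j * d)) * b j ^ q := by
  have hs : 0 < q - q₁ := by linarith
  have hexp : 0 < d / (2 * q) := by positivity
  have hlam : (1 : ℝ≥0∞) < 2 ^ (d / (2 * q)) := ENNReal.one_lt_rpow ENNReal.one_lt_two hexp
  obtain ⟨K₁, hK₁⟩ := exists_tsum_rpow_le_tsum_rpow_mul_rpow hq₁ hs hlam (two_rpow_ne_top _)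
  obtain ⟨K₂, hK₂⟩ := exists_tsum_two_rpow_mul_geomConv_rpow_le hq hd
  refine ⟨K₁ * M ^ (q - q₁) * K₂, fun N u b hu hub hint ↦ ?_⟩
  set D := geomConv (2 ^ (d / (2 * q))) b
  have hpartial (x : X) (n : ℕ) : ∑ i ∈ Finset.range (n + 1), u i x ≤ M * D n :=
    (Finset.sum_le_sum fun i _ ↦ hub i x).trans <| by
      rw [← Finset.mul_sum]
      gcongr
      exact sum_range_le_geomConv hlam.le n
  have hpointwise (x : X) : (∑' j, u j x) ^ q ≤
      K₁ * M ^ (q - q₁) * ∑' n, u n x ^ q₁ * D n ^ (q - q₁) := by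
    have h := hK₁ (fun n ↦ u n x) (fun n ↦ M * D n) (hpartial x)
      fun n ↦ by rw [mul_left_comm]; gcongr; exact le_self_add
    simp_rw [add_sub_cancel, ENNReal.mul_rpow_of_nonneg _ _ hs.le,
      mul_left_comm _ ((M : ℝ≥0∞) ^ (q - q₁)), ENNReal.tsum_mul_left] at h
    rwa [mul_assoc]
  have hterm (n : ℕ) : ∫⁻ x, u n x ^ q₁ * D n ^ (q - q₁) ∂μ ≤
      N * (2 ^ (-(n * d)) * D n ^ q) := by
    calc _ = (∫⁻ x, u n x ^ q₁ ∂μ) * D n ^ (q - q₁) :=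
          lintegral_mul_const _ ((hu n).pow_const _)
      _ ≤ N * 2 ^ (-(n * d)) * D n ^ q₁ * D n ^ (q - q₁) := by
          refine mul_le_mul_left ((hint n).trans ?_) _
          gcongr
          exact le_geomConv n
      _ = _ := by
          rw [mul_assoc, ← ENNReal.rpow_add_of_nonneg _ _ hq₁.le hs.le, add_sub_cancel, mul_assoc]
  calc ∫⁻ x, (∑' j, u j x) ^ q ∂μ
      ≤ ∫⁻ x, K₁ * M ^ (q - q₁) * ∑' n, u n x ^ q₁ * D n ^ (q - q₁) ∂μ :=
        lintegral_mono hpointwise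
    _ = K₁ * M ^ (q - q₁) * ∑' n, ∫⁻ x, u n x ^ q₁ * D n ^ (q - q₁) ∂μ := by
        rw [lintegral_const_mul' _ _ (by finiteness),
          lintegral_tsum fun n ↦ (((hu n).pow_const _).mul_const _).aemeasurable]
    _ ≤ K₁ * M ^ (q - q₁) * (N * (K₂ * ∑' n : ℕ, 2 ^ (-(n * d)) * b n ^ q)) := by
        grw [ENNReal.tsum_le_tsum hterm, ENNReal.tsum_mul_left, hK₂ b]
    _ = _ := by
        rw [ENNReal.coe_mul, ENNReal.coe_mul, ENNReal.coe_rpow_of_nonneg _ hs.le]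
        ring

end ScaleSummation

section DyadicDecomposition

variable {W : Type*} {f : W → ℂ}

/-- The part of `f` on which `2^k ≤ |f| < 2^{k+1}`. -/
def dyadicPiece (f : W → ℂ) (k : ℤ) : W → ℂ :=
  {w | ‖f w‖ ∈ Ico ((2 : ℝ) ^ k) (2 ^ (k + 1))}.indicator f

/-- At each point at most one dyadic piece is nonzero, so `∑ φ(f_k) = φ(f)` for every `φ` that
vanishes at `0`. -/
lemma hasSum_comp_dyadicPiece {β : Type*} [AddCommMonoid β] [TopologicalSpace β] {φ : ℂ → β}
    (hφ : φ 0 = 0) (f : W → ℂ) (w : W) :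
    HasSum (fun k ↦ φ (dyadicPiece f k w)) (φ (f w)) := by
  rcases eq_or_ne (f w) 0 with h0 | h0
  · simp [dyadicPiece, indicator_apply, h0, hφ, hasSum_zero]
  obtain ⟨n, hn⟩ := exists_mem_Ico_zpow (norm_pos_iff.2 h0) one_lt_two
  have hval : dyadicPiece f n w = f w :=
    indicator_of_mem (s := {w | ‖f w‖ ∈ Ico ((2 : ℝ) ^ n) (2 ^ (n + 1))}) hn f
  rw [← hval]
  refine hasSum_single n fun k hk ↦ ?_
  rw [dyadicPiece, indicator_of_notMem, hφ]
  intro hkw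
  have h1 : (2 : ℝ) ^ k < 2 ^ (n + 1) := hkw.1.trans_lt hn.2
  have h2 : (2 : ℝ) ^ n < 2 ^ (k + 1) := hn.1.trans_lt hkw.2
  rw [zpow_lt_zpow_iff_right₀ one_lt_two] at h1 h2
  omega

lemma enorm_dyadicPiece_le (f : W → ℂ) (k : ℤ) (w : W) :
    ‖dyadicPiece f k w‖ₑ ≤ 2 ^ ((k : ℝ) + 1) := by
  rw [dyadicPiece, enorm_indicator_eq_indicator_enorm]
  refine indicator_apply_le' (fun hw ↦ ?_) fun _ ↦ zero_le
  have htop : ENNReal.ofReal ((2 : ℝ) ^ (k + 1)) = 2 ^ ((k : ℝ) + 1) := by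
    rw [ofReal_two_zpow]
    push_cast
    rfl
  rw [← htop, ← ofReal_norm]
  exact ENNReal.ofReal_le_ofReal hw.2.le

lemma enorm_dyadicPiece_rpow_le {s p : ℝ} (hs : 0 < s) (hp : 0 < p) (f : W → ℂ) (k : ℤ) (w : W) :
    ‖dyadicPiece f k w‖ₑ ^ s ≤ 2 ^ s * 2 ^ (k * (s - p)) * ‖dyadicPiece f k w‖ₑ ^ p := by
  by_cases hw : ‖f w‖ ∈ Ico ((2 : ℝ) ^ k) (2 ^ (k + 1))
  · have hlow : (2 : ℝ≥0∞) ^ (k : ℝ) ≤ ‖dyadicPiece f k w‖ₑ := by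
      rw [dyadicPiece, indicator_of_mem (by exact hw), ← ofReal_norm, ← ofReal_two_zpow]
      exact ENNReal.ofReal_le_ofReal hw.1
    calc ‖dyadicPiece f k w‖ₑ ^ s ≤ (2 ^ ((k : ℝ) + 1)) ^ s := by
          gcongr
          exact enorm_dyadicPiece_le f k w
      _ = 2 ^ s * 2 ^ (k * (s - p)) * (2 ^ (k : ℝ)) ^ p := by
          simp_rw [← ENNReal.rpow_mul, ← two_rpow_add]
          congr 1
          ring
      _ ≤ _ := by gcongr
  · rw [dyadicPiece, indicator_of_notMem (by exact hw)]
    simp [hs, hp]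

variable [MeasurableSpace W] {ν : Measure W}

lemma measurableSet_norm_mem_Ico (hf : Measurable f) (a b : ℝ) :
    MeasurableSet {w | ‖f w‖ ∈ Ico a b} :=
  measurableSet_preimage hf.norm measurableSet_Ico

lemma measurable_dyadicPiece (hf : Measurable f) (k : ℤ) : Measurable (dyadicPiece f k) :=
  hf.indicator (measurableSet_norm_mem_Ico hf _ _)

lemma integrable_dyadicPiece (hf : Measurable f) (hfi : Integrable f ν) (k : ℤ) :
    Integrable (dyadicPiece f k) ν :=
  hfi.indicator (measurableSet_norm_mem_Ico hf _ _)

lemma lintegral_dyadicPiece_rpow_le (hf : Measurable f) {s p : ℝ} (hs : 0 < s) (hp : 0 < p)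
    (k : ℤ) : ∫⁻ w, ‖dyadicPiece f k w‖ₑ ^ s ∂ν ≤
      2 ^ s * 2 ^ (k * (s - p)) * ∫⁻ w, ‖dyadicPiece f k w‖ₑ ^ p ∂ν := by
  rw [← lintegral_const_mul _ ((measurable_dyadicPiece hf k).enorm.pow_const p)]
  exact lintegral_mono fun w ↦ enorm_dyadicPiece_rpow_le hs hp f k w

lemma tsum_lintegral_dyadicPiece_rpow (hf : Measurable f) {p : ℝ} (hp : 0 < p) :
    ∑' k, ∫⁻ w, ‖dyadicPiece f k w‖ₑ ^ p ∂ν = ∫⁻ w, ‖f w‖ₑ ^ p ∂ν := by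
  rw [← lintegral_tsum fun k ↦ ((measurable_dyadicPiece hf k).enorm.pow_const p).aemeasurable]
  exact lintegral_congr fun w ↦
    (hasSum_comp_dyadicPiece (φ := fun z ↦ ‖z‖ₑ ^ p) (by simp [hp]) f w).tsum_eq

end DyadicDecomposition

section KernelOperators

variable {X T W : Type*} [MeasurableSpace W] {ν : Measure W}

/-- The operator `f ↦ ∫ m(x, t, w) f(w) dν(w)` with kernel `m`, producing a function of a space
variable `x` and a time variable `t`. -/
def kernelOp (ν : Measure W) (m : X → T → W → ℂ) (f : W → ℂ) (x : X) (t : T) : ℂ :=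
  ∫ w, m x t w * f w ∂ν

lemma enorm_kernelOp_le (ν : Measure W) (m : X → T → W → ℂ) (f : W → ℂ) (x : X) (t : T) :
    ‖kernelOp ν m f x t‖ₑ ≤ ∫⁻ w, ‖m x t w‖ₑ * ‖f w‖ₑ ∂ν := by
  refine (enorm_integral_le_lintegral_enorm _).trans_eq ?_
  simp_rw [enorm_mul]

variable [MeasurableSpace X] [MeasurableSpace T] {τ : Measure T}

/-- A bounded measurable kernel whose integrals over the input variable `w` and over the time
variable `t` are at most `A`, uniformly in the remaining variables. -/
structure IsSchurKernel (τ : Measure T) (ν : Measure W) (A : ℝ≥0) (m : X → T → W → ℂ) :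
    Prop where
  measurable : Measurable fun z : (X × T) × W ↦ m z.1.1 z.1.2 z.2
  exists_bound : ∃ M : ℝ, ∀ x t w, ‖m x t w‖ ≤ M
  lintegral_input_le : ∀ x t, ∫⁻ w, ‖m x t w‖ₑ ∂ν ≤ A
  lintegral_time_le : ∀ x w, ∫⁻ t, ‖m x t w‖ₑ ∂τ ≤ A

namespace IsSchurKernel

variable {A : ℝ≥0} {m : X → T → W → ℂ} {f : W → ℂ}

lemma mono (hm : IsSchurKernel τ ν A m) {τ' : Measure T} {A' : ℝ≥0} (hτ : τ' ≤ τ)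
    (hA : A ≤ A') : IsSchurKernel τ' ν A' m where
  measurable := hm.measurable
  exists_bound := hm.exists_bound
  lintegral_input_le x t := (hm.lintegral_input_le x t).trans (by gcongr)
  lintegral_time_le x w := (lintegral_mono' hτ le_rfl).trans
    ((hm.lintegral_time_le x w).trans (by gcongr))

lemma measurable_input (hm : IsSchurKernel τ ν A m) (x : X) (t : T) : Measurable (m x t) :=
  hm.measurable.comp (measurable_prodMk_left (x := (x, t)))

lemma integrable_mul (hm : IsSchurKernel τ ν A m) (hf : Integrable f ν) (x : X) (t : T) :
    Integrable (fun w ↦ m x t w * f w) ν := by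
  obtain ⟨M, hM⟩ := hm.exists_bound
  exact hf.bdd_mul (hm.measurable_input x t).aestronglyMeasurable (.of_forall (hM x t))

lemma kernelOp_add (hm : IsSchurKernel τ ν A m) {g : W → ℂ} (hf : Integrable f ν)
    (hg : Integrable g ν) (x : X) (t : T) :
    kernelOp ν m (f + g) x t = kernelOp ν m f x t + kernelOp ν m g x t := by
  simp only [kernelOp, Pi.add_apply, mul_add]
  exact integral_add (hm.integrable_mul hf x t) (hm.integrable_mul hg x t)

lemma enorm_kernelOp_le_of_enorm_le (hm : IsSchurKernel τ ν A m) {M : ℝ≥0∞}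
    (hf : ∀ w, ‖f w‖ₑ ≤ M) (x : X) (t : T) : ‖kernelOp ν m f x t‖ₑ ≤ A * M :=
  calc ‖kernelOp ν m f x t‖ₑ ≤ ∫⁻ w, ‖m x t w‖ₑ * M ∂ν :=
        (enorm_kernelOp_le ν m f x t).trans (by gcongr; exact hf _)
    _ = (∫⁻ w, ‖m x t w‖ₑ ∂ν) * M := lintegral_mul_const _ (hm.measurable_input x t).enorm
    _ ≤ A * M := by gcongr; exact hm.lintegral_input_le x t

lemma enorm_kernelOp_le_tsum_dyadicPiece (hm : IsSchurKernel τ ν A m) (hf : Measurable f)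
    (hfi : Integrable f ν) (x : X) (t : T) :
    ‖kernelOp ν m f x t‖ₑ ≤ ∑' k, ‖kernelOp ν m (dyadicPiece f k) x t‖ₑ := by
  have hmeas (k : ℤ) : Measurable fun w ↦ m x t w * dyadicPiece f k w :=
    (hm.measurable_input x t).mul (measurable_dyadicPiece hf k)
  have habs : ∑' k, ∫⁻ w, ‖m x t w * dyadicPiece f k w‖ₑ ∂ν = ∫⁻ w, ‖m x t w * f w‖ₑ ∂ν := by
    rw [← lintegral_tsum fun k ↦ (hmeas k).enorm.aemeasurable]
    exact lintegral_congr fun w ↦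
      (hasSum_comp_dyadicPiece (φ := fun z ↦ ‖m x t w * z‖ₑ) (by simp) f w).tsum_eq
  have hsum : kernelOp ν m f x t = ∑' k, kernelOp ν m (dyadicPiece f k) x t := by
    simp_rw [kernelOp]
    rw [← integral_tsum (fun k ↦ (hmeas k).aestronglyMeasurable)
      (habs ▸ (hm.integrable_mul hfi x t).2.ne)]
    congr with w
    exact (hasSum_comp_dyadicPiece (φ := fun z ↦ m x t w * z) (by simp) f w).tsum_eq.symm
  rw [hsum]
  exact enorm_tsum_le_tsum_enorm

variable [SFinite ν]

lemma measurable_kernelOp (hm : IsSchurKernel τ ν A m) (hf : Measurable f) :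
    Measurable fun z : X × T ↦ kernelOp ν m f z.1 z.2 :=
  (hm.measurable.mul (hf.comp measurable_snd)).stronglyMeasurable.integral_prod_right'.measurable

lemma measurable_kernelOp_time (hm : IsSchurKernel τ ν A m) (hf : Measurable f) (x : X) :
    Measurable (kernelOp ν m f x) :=
  (hm.measurable_kernelOp hf).comp measurable_prodMk_left

variable [SFinite τ]

lemma measurable_lintegral_kernelOp_rpow (hm : IsSchurKernel τ ν A m) (hf : Measurable f)
    (s : ℝ) : Measurable fun x ↦ ∫⁻ t, ‖kernelOp ν m f x t‖ₑ ^ s ∂τ :=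
  ((hm.measurable_kernelOp hf).enorm.pow_const s).lintegral_prod_right'

lemma lintegral_enorm_kernelOp_le (hm : IsSchurKernel τ ν A m) (hf : Measurable f) (x : X) :
    ∫⁻ t, ‖kernelOp ν m f x t‖ₑ ∂τ ≤ A * ∫⁻ w, ‖f w‖ₑ ∂ν := by
  have hmx : Measurable fun z : T × W ↦ ‖m x z.1 z.2‖ₑ :=
    (hm.measurable.comp ((measurable_const (a := x)).prodMk measurable_fst |>.prodMk
      measurable_snd)).enorm
  calc ∫⁻ t, ‖kernelOp ν m f x t‖ₑ ∂τ
      ≤ ∫⁻ t, ∫⁻ w, ‖m x t w‖ₑ * ‖f w‖ₑ ∂ν ∂τ :=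
        lintegral_mono fun t ↦ enorm_kernelOp_le ν m f x t
    _ = ∫⁻ w, (∫⁻ t, ‖m x t w‖ₑ ∂τ) * ‖f w‖ₑ ∂ν := by
        rw [lintegral_lintegral_swap (hmx.mul (hf.enorm.comp measurable_snd)).aemeasurable]
        exact lintegral_congr fun w ↦ lintegral_mul_const _ (hmx.comp measurable_prodMk_right)
    _ ≤ ∫⁻ w, A * ‖f w‖ₑ ∂ν := by gcongr with w; exact hm.lintegral_time_le x w
    _ = A * ∫⁻ w, ‖f w‖ₑ ∂ν := lintegral_const_mul _ hf.enorm

end IsSchurKernel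

end KernelOperators

section Interpolation

lemma eLpNorm'_rpow {α : Type*} [MeasurableSpace α] (f : α → ℂ) (p q : ℝ) (μ : Measure α) :
    eLpNorm' f p μ ^ q = (∫⁻ x, ‖f x‖ₑ ^ p ∂μ) ^ (q / p) := by
  rw [eLpNorm'_eq_lintegral_enorm, ← ENNReal.rpow_mul, one_div_mul_eq_div]

lemma lintegral_rpow_le_rpow_mul_rpow {α : Type*} [MeasurableSpace α] {μ : Measure α}
    {g : α → ℝ≥0∞} (hg : Measurable g) {p s : ℝ} (hp : 0 ≤ p) (hs : 0 ≤ s) (hs' : s ≤ 1) :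
    ∫⁻ x, g x ^ (s * p + (1 - s)) ∂μ ≤ (∫⁻ x, g x ^ p ∂μ) ^ s * (∫⁻ x, g x ∂μ) ^ (1 - s) := by
  have h1s : 0 ≤ 1 - s := by linarith
  have hsplit (x : α) : g x ^ (s * p + (1 - s)) = (g x ^ p) ^ s * g x ^ (1 - s) := by
    rw [ENNReal.rpow_add_of_nonneg _ _ (by positivity) h1s, mul_comm s, ENNReal.rpow_mul]
  simp_rw [hsplit]
  exact ENNReal.lintegral_mul_norm_pow_le (hg.pow_const p).aemeasurable hg.aemeasurable hs h1s
    (by ring)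

variable {X T W : Type*} [MeasurableSpace X] [MeasurableSpace T] [MeasurableSpace W]
  {μ : Measure X} {τ : Measure T} {ν : Measure W}

/-- The operator with kernel `m` satisfies
`‖T f‖_{L^q(μ; L^r(τ))}^q ≤ B ‖f‖_{L^p(ν)}^q` for integrable `f`. -/
def HasMixedBound (μ : Measure X) (τ : Measure T) (ν : Measure W) (m : X → T → W → ℂ)
    (p r q : ℝ) (B : ℝ≥0∞) : Prop :=
  ∀ f : W → ℂ, Measurable f → Integrable f ν →
    ∫⁻ x, eLpNorm' (kernelOp ν m f x) r τ ^ q ∂μ ≤ B * eLpNorm' f p ν ^ q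

variable [SFinite τ] [SFinite ν] {p p₀ p₁ s κ : ℝ} {A : ℝ≥0} {m : X → T → W → ℂ} {B : ℝ≥0∞}
  {f : W → ℂ}

lemma exists_lintegral_kernelOp_rpow_le_tsum (τ : Measure T) [SFinite τ] (ν : Measure W)
    [SFinite ν] (hp₁ : 0 < p₁) (hp₁p : p₁ < p) (A : ℝ≥0) :
    ∃ K : ℝ≥0, ∀ m : X → T → W → ℂ, IsSchurKernel τ ν A m → ∀ f : W → ℂ, Measurable f →
      Integrable f ν → ∀ x, ∫⁻ t, ‖kernelOp ν m f x t‖ₑ ^ p ∂τ ≤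
        K * ∑' k : ℤ,
          (∫⁻ t, ‖kernelOp ν m (dyadicPiece f k) x t‖ₑ ^ p₁ ∂τ) * 2 ^ (k * (p - p₁)) := by
  obtain ⟨K, hK⟩ := exists_tsum_rpow_le_tsum_rpow_mul_two_rpow hp₁ (sub_pos.2 hp₁p) A
  refine ⟨K, fun m hm f hf hfi x ↦ ?_⟩
  have hmeas (k : ℤ) : Measurable fun t ↦ ‖kernelOp ν m (dyadicPiece f k) x t‖ₑ ^ p₁ :=
    (hm.measurable_kernelOp_time (measurable_dyadicPiece hf k) x).enorm.pow_const p₁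
  calc ∫⁻ t, ‖kernelOp ν m f x t‖ₑ ^ p ∂τ
      ≤ ∫⁻ t, (∑' k, ‖kernelOp ν m (dyadicPiece f k) x t‖ₑ) ^ (p₁ + (p - p₁)) ∂τ := by
        rw [add_sub_cancel]
        refine lintegral_mono fun t ↦ ENNReal.rpow_le_rpow ?_ (hp₁.trans hp₁p).le
        exact hm.enorm_kernelOp_le_tsum_dyadicPiece hf hfi x t
    _ ≤ ∫⁻ t, K * ∑' k : ℤ,
          ‖kernelOp ν m (dyadicPiece f k) x t‖ₑ ^ p₁ * 2 ^ (k * (p - p₁)) ∂τ :=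
        lintegral_mono fun t ↦ hK _ fun k ↦
          hm.enorm_kernelOp_le_of_enorm_le (enorm_dyadicPiece_le f k) x t
    _ = _ := by
        rw [lintegral_const_mul' _ _ ENNReal.coe_ne_top,
          lintegral_tsum fun k ↦ ((hmeas k).mul_const _).aemeasurable]
        simp_rw [lintegral_mul_const _ (hmeas _)]

lemma two_rpow_mul_two_rpow_cancel (k : ℤ) (a b : ℝ) :
    (2 : ℝ≥0∞) ^ (k * (a - b)) * 2 ^ (k * (b - a)) = 1 := by
  rw [← two_rpow_add, ← mul_add, sub_add_sub_cancel, sub_self, mul_zero, ENNReal.rpow_zero]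

lemma exists_lintegral_kernelOp_rpow_le (τ : Measure T) [SFinite τ] (ν : Measure W) [SFinite ν]
    (hp : 1 < p) (A : ℝ≥0) :
    ∃ K : ℝ≥0, ∀ m : X → T → W → ℂ, IsSchurKernel τ ν A m → ∀ f : W → ℂ, Measurable f →
      Integrable f ν → ∀ x, ∫⁻ t, ‖kernelOp ν m f x t‖ₑ ^ p ∂τ ≤ K * ∫⁻ w, ‖f w‖ₑ ^ p ∂ν := by
  obtain ⟨K, hK⟩ := exists_lintegral_kernelOp_rpow_le_tsum (X := X) τ ν one_pos hp A
  refine ⟨K * (A * 2), fun m hm f hf hfi x ↦ (hK m hm f hf hfi x).trans ?_⟩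
  have hpiece (k : ℤ) : (∫⁻ t, ‖kernelOp ν m (dyadicPiece f k) x t‖ₑ ^ (1 : ℝ) ∂τ) *
      2 ^ (k * (p - 1)) ≤ A * 2 * ∫⁻ w, ‖dyadicPiece f k w‖ₑ ^ p ∂ν := by
    have h1 := lintegral_dyadicPiece_rpow_le (ν := ν) hf one_pos (zero_lt_one.trans hp) k
    simp only [ENNReal.rpow_one] at h1 ⊢
    calc _ ≤ (A * (2 * 2 ^ (k * (1 - p)) * ∫⁻ w, ‖dyadicPiece f k w‖ₑ ^ p ∂ν)) *
          2 ^ (k * (p - 1)) := by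
          gcongr
          exact (hm.lintegral_enorm_kernelOp_le (measurable_dyadicPiece hf k) x).trans (by gcongr)
      _ = A * 2 * (∫⁻ w, ‖dyadicPiece f k w‖ₑ ^ p ∂ν) *
          (2 ^ (k * (1 - p)) * 2 ^ (k * (p - 1))) := by ring
      _ = _ := by rw [two_rpow_mul_two_rpow_cancel, mul_one]
  rw [ENNReal.coe_mul, mul_assoc]
  push_cast
  gcongr
  rw [← tsum_lintegral_dyadicPiece_rpow hf (zero_lt_one.trans hp), ← ENNReal.tsum_mul_left]
  exact ENNReal.tsum_le_tsum hpiece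

lemma lintegral_lintegral_kernelOp_rpow_le (hm : IsSchurKernel τ ν A m) (hp₀ : 0 < p₀)
    (hs : 0 ≤ s) (hs' : s ≤ 1) (hκ : 0 ≤ κ) (hB : HasMixedBound μ τ ν m p₀ p₀ (s * κ * p₀) B)
    (hf : Measurable f) (hfi : Integrable f ν) :
    ∫⁻ x, (∫⁻ t, ‖kernelOp ν m f x t‖ₑ ^ (s * p₀ + (1 - s)) ∂τ) ^ κ ∂μ ≤
      B * (∫⁻ w, ‖f w‖ₑ ^ p₀ ∂ν) ^ (s * κ) * (A * ∫⁻ w, ‖f w‖ₑ ∂ν) ^ ((1 - s) * κ) := by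
  have hfB := hB f hf hfi
  simp_rw [eLpNorm'_rpow, mul_div_cancel_right₀ _ hp₀.ne'] at hfB
  calc _ ≤ ∫⁻ x, (∫⁻ t, ‖kernelOp ν m f x t‖ₑ ^ p₀ ∂τ) ^ (s * κ) *
        (A * ∫⁻ w, ‖f w‖ₑ ∂ν) ^ ((1 - s) * κ) ∂μ := by
        gcongr with x
        rw [ENNReal.rpow_mul, ENNReal.rpow_mul, ← ENNReal.mul_rpow_of_nonneg _ _ hκ]
        gcongr
        refine (lintegral_rpow_le_rpow_mul_rpow (hm.measurable_kernelOp_time hf x).enorm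
          hp₀.le hs hs').trans ?_
        gcongr
        exact hm.lintegral_enorm_kernelOp_le hf x
    _ = (∫⁻ x, (∫⁻ t, ‖kernelOp ν m f x t‖ₑ ^ p₀ ∂τ) ^ (s * κ) ∂μ) *
        (A * ∫⁻ w, ‖f w‖ₑ ∂ν) ^ ((1 - s) * κ) :=
        lintegral_mul_const _ ((hm.measurable_lintegral_kernelOp_rpow hf p₀).pow_const _)
    _ ≤ _ := by gcongr

lemma rpow_lintegral_kernelOp_dyadicPiece_le (hm : IsSchurKernel τ ν A m) (hp : 0 < p)
    (hp₀ : 0 < p₀) (hs : 0 ≤ s) (hs' : s ≤ 1) (hκ : 0 < κ)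
    (hB : HasMixedBound μ τ ν m p₀ p₀ (s * κ * p₀) B) (hf : Measurable f) (hfi : Integrable f ν)
    (k : ℤ) (hp₁ : p₁ = s * p₀ + (1 - s)) :
    (∫⁻ x, (∫⁻ t, ‖kernelOp ν m (dyadicPiece f k) x t‖ₑ ^ p₁ ∂τ) ^ κ ∂μ) ^ (1 / κ) ≤
      A ^ (1 - s) * 2 ^ p₁ * B ^ (1 / κ) *
        (2 ^ (k * (p₁ - p)) * ∫⁻ w, ‖dyadicPiece f k w‖ₑ ^ p ∂ν) := by
  set V := ∫⁻ w, ‖dyadicPiece f k w‖ₑ ^ p ∂ν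
  have h1s : 0 ≤ 1 - s := by linarith
  have hκ' : 0 ≤ 1 / κ := by positivity
  have h0 : ∫⁻ w, ‖dyadicPiece f k w‖ₑ ^ p₀ ∂ν ≤ 2 ^ (p₀ + k * (p₀ - p)) * V := by
    rw [two_rpow_add]
    exact lintegral_dyadicPiece_rpow_le hf hp₀ hp k
  have h1 : ∫⁻ w, ‖dyadicPiece f k w‖ₑ ∂ν ≤ 2 ^ (1 + k * (1 - p)) * V := by
    rw [two_rpow_add]
    simpa only [ENNReal.rpow_one] using lintegral_dyadicPiece_rpow_le hf one_pos hp k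
  have hle := lintegral_lintegral_kernelOp_rpow_le hm hp₀ hs hs' hκ.le hB
    (measurable_dyadicPiece hf k) (integrable_dyadicPiece hf hfi k)
  rw [← hp₁] at hle
  calc _ ≤ (B * (2 ^ (p₀ + k * (p₀ - p)) * V) ^ (s * κ) *
        (A * (2 ^ (1 + k * (1 - p)) * V)) ^ ((1 - s) * κ)) ^ (1 / κ) := by
        refine ENNReal.rpow_le_rpow (hle.trans ?_) hκ'
        gcongr
    _ = B ^ (1 / κ) * (2 ^ (p₀ + k * (p₀ - p)) * V) ^ s *
        (A * (2 ^ (1 + k * (1 - p)) * V)) ^ (1 - s) := by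
        simp only [ENNReal.mul_rpow_of_nonneg _ _ hκ', ← ENNReal.rpow_mul, mul_assoc _ κ,
          mul_one_div_cancel hκ.ne', mul_one]
    _ = A ^ (1 - s) * B ^ (1 / κ) * (2 ^ ((p₀ + k * (p₀ - p)) * s) *
        2 ^ ((1 + k * (1 - p)) * (1 - s))) * (V ^ s * V ^ (1 - s)) := by
        simp only [ENNReal.mul_rpow_of_nonneg _ _ hs, ENNReal.mul_rpow_of_nonneg _ _ h1s,
          ENNReal.rpow_mul]
        ring
    _ = A ^ (1 - s) * B ^ (1 / κ) * (2 ^ p₁ * 2 ^ (k * (p₁ - p))) * V := by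
        rw [← ENNReal.rpow_add_of_nonneg _ _ hs h1s, add_sub_cancel, ENNReal.rpow_one,
          ← two_rpow_add, ← two_rpow_add, hp₁]
        ring_nf
    _ = _ := by ring

lemma rpow_lintegral_tsum_kernelOp_dyadicPiece_le (hm : IsSchurKernel τ ν A m) (hp : 0 < p)
    (hp₀ : 0 < p₀) (hs : 0 ≤ s) (hs' : s ≤ 1) (hκ : 1 ≤ κ)
    (hB : HasMixedBound μ τ ν m p₀ p₀ (s * κ * p₀) B) (hf : Measurable f) (hfi : Integrable f ν)
    (hp₁ : p₁ = s * p₀ + (1 - s)) :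
    (∫⁻ x, (∑' k : ℤ, (∫⁻ t, ‖kernelOp ν m (dyadicPiece f k) x t‖ₑ ^ p₁ ∂τ) *
      2 ^ (k * (p - p₁))) ^ κ ∂μ) ^ (1 / κ) ≤
        A ^ (1 - s) * 2 ^ p₁ * B ^ (1 / κ) * ∫⁻ w, ‖f w‖ₑ ^ p ∂ν := by
  have hκ0 : 0 < κ := by linarith
  have hmeas (k : ℤ) :
      Measurable fun x ↦ ∫⁻ t, ‖kernelOp ν m (dyadicPiece f k) x t‖ₑ ^ p₁ ∂τ :=
    hm.measurable_lintegral_kernelOp_rpow (measurable_dyadicPiece hf k) p₁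
  refine (lintegral_rpow_tsum_le hκ fun k ↦ (hmeas k).mul_const _).trans ?_
  rw [← tsum_lintegral_dyadicPiece_rpow hf hp, ← ENNReal.tsum_mul_left]
  refine ENNReal.tsum_le_tsum fun k ↦ ?_
  simp_rw [ENNReal.mul_rpow_of_nonneg _ _ hκ0.le]
  rw [lintegral_mul_const _ ((hmeas k).pow_const κ),
    ENNReal.mul_rpow_of_nonneg _ _ (by positivity), ← ENNReal.rpow_mul _ κ,
    mul_one_div_cancel hκ0.ne', ENNReal.rpow_one]
  refine (mul_le_mul_left (rpow_lintegral_kernelOp_dyadicPiece_le hm hp hp₀ hs hs' hκ0 hB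
    hf hfi k hp₁) _).trans_eq ?_
  rw [mul_assoc, mul_right_comm (2 ^ _), two_rpow_mul_two_rpow_cancel, one_mul]

/-- A Marcinkiewicz argument: the dyadic pieces of `f` satisfy the estimates interpolated between
the hypothesis and the trivial `L^1` bound, and they are summed by the triangle inequality. -/
theorem exists_hasMixedBound (μ : Measure X) (τ : Measure T) [SFinite τ] (ν : Measure W)
    [SFinite ν] (hp₀ : 0 < p₀) (hs : 0 < s) (hs' : s ≤ 1) (hκ : 1 ≤ κ)
    (hp₁ : p₁ = s * p₀ + (1 - s)) (hp₁p : p₁ < p) (A : ℝ≥0) :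
    ∃ K : ℝ≥0, ∀ m : X → T → W → ℂ, IsSchurKernel τ ν A m → ∀ B : ℝ≥0∞,
      HasMixedBound μ τ ν m p₀ p₀ (s * κ * p₀) B → HasMixedBound μ τ ν m p p (κ * p) (K * B) := by
  have h1s : 0 ≤ 1 - s := by linarith
  have hp₁0 : 0 < p₁ := by rw [hp₁]; positivity
  have hp : 0 < p := hp₁0.trans hp₁p
  have hκ0 : 0 < κ := by linarith
  obtain ⟨K, hK⟩ := exists_lintegral_kernelOp_rpow_le_tsum (X := X) τ ν hp₁0 hp₁p A
  refine ⟨(K * (A ^ (1 - s) * 2 ^ p₁)) ^ κ, fun m hm B hB f hf hfi ↦ ?_⟩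
  simp_rw [eLpNorm'_rpow, mul_div_cancel_right₀ _ hp.ne']
  have hsum := rpow_lintegral_tsum_kernelOp_dyadicPiece_le hm hp hp₀ hs.le hs' hκ hB hf hfi hp₁
  rw [one_div, ENNReal.rpow_inv_le_iff hκ0] at hsum
  calc _ ≤ ∫⁻ x, (K : ℝ≥0∞) ^ κ * (∑' k : ℤ,
        (∫⁻ t, ‖kernelOp ν m (dyadicPiece f k) x t‖ₑ ^ p₁ ∂τ) * 2 ^ (k * (p - p₁))) ^ κ ∂μ := by
        gcongr with x
        rw [← ENNReal.mul_rpow_of_nonneg _ _ hκ0.le]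
        gcongr
        exact hK m hm f hf hfi x
    _ ≤ K ^ κ * (A ^ (1 - s) * 2 ^ p₁ * B ^ κ⁻¹ * ∫⁻ w, ‖f w‖ₑ ^ p ∂ν) ^ κ := by
        rw [lintegral_const_mul' _ _ (by simp [hκ0.le])]
        gcongr
    _ = _ := by
        rw [ENNReal.coe_rpow_of_nonneg _ hκ0.le]
        push_cast
        simp only [ENNReal.coe_rpow_of_nonneg _ h1s, ENNReal.coe_rpow_of_nonneg _ hp₁0.le,
          ENNReal.mul_rpow_of_nonneg _ _ hκ0.le, ENNReal.rpow_inv_rpow hκ0.ne', ENNReal.coe_ofNat]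
        ring

end Interpolation

section Summation

variable {X T W : Type*} [MeasurableSpace X] [MeasurableSpace T] [MeasurableSpace W]
  {p₀ q₀ p q d : ℝ}

/-- The function `x ↦ ∑ ‖T_j f_j(x, ·)‖_{L^r(τ)}` for the operators `T_j` with kernels `m j`. -/
def sumNorm (τ : Measure T) (ν : Measure W) (m : ℕ → X → T → W → ℂ) (r : ℝ) (f : ℕ → W → ℂ)
    (x : X) : ℝ≥0∞ :=
  ∑' j, eLpNorm' (kernelOp ν (m j) (f j) x) r τ

/-- The `ℓ^q(L^p)`-type quantity `∑ 2^{-jd} ‖f_j‖_{L^p(ν)}^q`. -/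
def scaleSum (ν : Measure W) (p q d : ℝ) (f : ℕ → W → ℂ) : ℝ≥0∞ :=
  ∑' j : ℕ, 2 ^ (-(j * d)) * eLpNorm' (f j) p ν ^ q

/-- The multi-scale estimate `‖∑ ‖T_j f_j‖_{L^r(τ)}‖_{L^q(μ)}^q ≤ K ∑ 2^{-jd} ‖f_j‖_{L^p(ν)}^q`
for the operators `T_j` with kernels `m j` and integrable `f_j`. -/
def HasSummedBound (μ : Measure X) (τ : Measure T) (ν : Measure W) (m : ℕ → X → T → W → ℂ)
    (p r q d : ℝ) (K : ℝ≥0∞) : Prop :=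
  ∀ f : ℕ → W → ℂ, (∀ j, Measurable (f j)) → (∀ j, Integrable (f j) ν) →
    ∫⁻ x, sumNorm τ ν m r f x ^ q ∂μ ≤ K * scaleSum ν p q d f

lemma HasSummedBound.mono {m : ℕ → X → T → W → ℂ} {r : ℝ} {K K' : ℝ≥0∞}
    (h : HasSummedBound μ τ ν m p r q d K) (hK : K ≤ K') :
    HasSummedBound μ τ ν m p r q d K' :=
  fun f hf hfi ↦ (h f hf hfi).trans (by gcongr)

lemma one_lt_of_one_div_lt (hp₀ : 1 ≤ p₀) (hq₀ : 0 < q₀) (hq : 0 < q)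
    (hmin : 1 / p < 1 - q₀ / q * (1 - 1 / p₀)) (hmax : q₀ / q * (1 / p₀) < 1 / p) : 1 < p := by
  have h0 : 0 < 1 / p := lt_of_le_of_lt (by positivity) hmax
  have h1 : 0 ≤ q₀ / q * (1 - 1 / p₀) :=
    mul_nonneg (by positivity) (sub_nonneg.2 ((div_le_one (by linarith)).2 hp₀))
  exact (one_div_lt (by simpa using h0) one_pos).1 (by linarith) |>.trans_eq' (by simp)

/-- The hypotheses say that some `κ` satisfies `q₀ / p₀ < κ < q / p` and
`q₀ (1 - 1 / p₀) / (p - 1) < κ`; then `s = q₀ / (p₀ κ)`. -/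
lemma exists_interpolation_exponents (hp₀ : 1 ≤ p₀) (hp₀q₀ : p₀ ≤ q₀) (hq₀q : q₀ < q)
    (hmin : 1 / p < 1 - q₀ / q * (1 - 1 / p₀)) (hmax : q₀ / q * (1 / p₀) < 1 / p) :
    ∃ κ s, 1 ≤ κ ∧ κ * p < q ∧ 0 < s ∧ s ≤ 1 ∧ s * κ * p₀ = q₀ ∧ s * p₀ + (1 - s) < p := by
  have hp₀0 : 0 < p₀ := by linarith
  have hq₀0 : 0 < q₀ := by linarith
  have hq0 : 0 < q := by linarith
  have hp : 1 < p := one_lt_of_one_div_lt hp₀ hq₀0 hq0 hmin hmax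
  have hp0 : 0 < p := by linarith
  have hκmax : q₀ / p₀ < q / p := by
    calc q₀ / p₀ = q * (q₀ / q * (1 / p₀)) := by field_simp
      _ < q * (1 / p) := by gcongr
      _ = q / p := by ring
  have hκmin : q₀ * (1 - 1 / p₀) / (p - 1) < q / p := by
    rw [div_lt_div_iff₀ (by linarith) hp0]
    calc q₀ * (1 - 1 / p₀) * p = q * p * (q₀ / q * (1 - 1 / p₀)) := by field_simp
      _ < q * p * (1 - 1 / p) := by gcongr; linarith
      _ = q * (p - 1) := by field_simp
  obtain ⟨κ, hκ, hκq⟩ := exists_between (max_lt hκmax hκmin)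
  obtain ⟨hκ₁, hκ₂⟩ := max_lt_iff.1 hκ
  have hκ1 : 1 < κ := ((one_le_div hp₀0).2 hp₀q₀).trans_lt hκ₁
  have hκ0 : 0 < κ := by linarith
  refine ⟨κ, q₀ / (p₀ * κ), hκ1.le, (lt_div_iff₀ hp0).1 hκq, by positivity, ?_,
    by field_simp, ?_⟩
  · rw [div_le_one (by positivity), mul_comm]
    exact ((div_lt_iff₀ hp₀0).1 hκ₁).le
  · have : q₀ * (1 - 1 / p₀) / κ < p - 1 := by
      rw [div_lt_iff₀ (by linarith)] at hκ₂ ⊢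
      linarith
    calc q₀ / (p₀ * κ) * p₀ + (1 - q₀ / (p₀ * κ)) = 1 + q₀ * (1 - 1 / p₀) / κ := by
          field_simp
          ring
      _ < p := by linarith

theorem exists_hasSummedBound (μ : Measure X) (τ : Measure T) [SFinite τ] (ν : Measure W)
    [SFinite ν] (hp₀ : 1 ≤ p₀) (hp₀q₀ : p₀ ≤ q₀) (hq₀q : q₀ < q) (hd : 0 < d)
    (hmin : 1 / p < 1 - q₀ / q * (1 - 1 / p₀)) (hmax : q₀ / q * (1 / p₀) < 1 / p) (A : ℝ≥0) :
    ∃ K : ℝ≥0, ∀ m : ℕ → X → T → W → ℂ, (∀ j, IsSchurKernel τ ν A (m j)) → ∀ N : ℝ≥0∞,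
      (∀ j : ℕ, HasMixedBound μ τ ν (m j) p₀ p₀ q₀ (N * 2 ^ (-(j * d)))) →
        HasSummedBound μ τ ν m p p q d (K * N) := by
  have hp : 1 < p := one_lt_of_one_div_lt hp₀ (by linarith) (by linarith) hmin hmax
  obtain ⟨κ, s, hκ, hκq, hs, hs', hsκ, hp₁⟩ :=
    exists_interpolation_exponents hp₀ hp₀q₀ hq₀q hmin hmax
  obtain ⟨K₁, hK₁⟩ := exists_hasMixedBound μ τ ν (by linarith) hs hs' hκ rfl hp₁ A
  obtain ⟨K₂, hK₂⟩ := exists_lintegral_kernelOp_rpow_le (X := X) τ ν hp A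
  obtain ⟨K, hK⟩ := exists_lintegral_tsum_rpow_le (μ := μ) (q₁ := κ * p) (by positivity) hκq
    (by linarith) hd (K₂ ^ (1 / p))
  refine ⟨K * K₁, fun m hm N hN f hf hfi ↦ ?_⟩
  rw [ENNReal.coe_mul, mul_assoc (K : ℝ≥0∞)]
  refine hK (K₁ * N) _ _ (fun j ↦ ?_) (fun j x ↦ ?_) fun j ↦ ?_
  · simp_rw [eLpNorm'_eq_lintegral_enorm]
    exact ((hm j).measurable_lintegral_kernelOp_rpow (hf j) p).pow_const _
  · rw [ENNReal.coe_rpow_of_nonneg _ (by positivity), eLpNorm'_eq_lintegral_enorm,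
      eLpNorm'_eq_lintegral_enorm, ← ENNReal.mul_rpow_of_nonneg _ _ (by positivity)]
    gcongr
    exact hK₂ (m j) (hm j) (f j) (hf j) (hfi j) x
  · rw [mul_assoc (K₁ : ℝ≥0∞)]
    exact hK₁ (m j) (hm j) _ (hsκ ▸ hN j) (f j) (hf j) (hfi j)

end Summation

section Convolution

lemma rpow_lintegral_mul_le {α : Type*} [MeasurableSpace α] {μ : Measure α} {q : ℝ} (hq : 1 ≤ q)
    {a h : α → ℝ≥0∞} (ha : Measurable a) (hh : Measurable h) :
    (∫⁻ x, a x * h x ∂μ) ^ q ≤ (∫⁻ x, a x ∂μ) ^ (q - 1) * ∫⁻ x, a x * h x ^ q ∂μ := by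
  have hq0 : 0 < q := by linarith
  have hq' : 0 ≤ 1 - 1 / q := sub_nonneg.2 ((div_le_one hq0).2 hq)
  have hsplit (x : α) : a x * h x = (a x * h x ^ q) ^ (1 / q) * a x ^ (1 - 1 / q) := by
    rw [ENNReal.mul_rpow_of_nonneg _ _ (by positivity), ← ENNReal.rpow_mul,
      mul_one_div_cancel hq0.ne', ENNReal.rpow_one, mul_right_comm,
      ← ENNReal.rpow_add_of_nonneg _ _ (by positivity) hq', add_sub_cancel, ENNReal.rpow_one]
  have hholder := ENNReal.lintegral_mul_norm_pow_le (μ := μ) (ha.mul (hh.pow_const q)).aemeasurable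
    ha.aemeasurable (by positivity) hq' (add_sub_cancel (1 / q) 1)
  simp_rw [Pi.mul_apply, ← hsplit] at hholder
  calc (∫⁻ x, a x * h x ∂μ) ^ q
      ≤ ((∫⁻ x, a x * h x ^ q ∂μ) ^ (1 / q) * (∫⁻ x, a x ∂μ) ^ (1 - 1 / q)) ^ q := by gcongr
    _ = _ := by
        rw [ENNReal.mul_rpow_of_nonneg _ _ hq0.le, ← ENNReal.rpow_mul, ← ENNReal.rpow_mul,
          one_div_mul_cancel hq0.ne', ENNReal.rpow_one, mul_comm, sub_mul, one_mul,
          one_div_mul_cancel hq0.ne']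

lemma rpow_tsum_mul_le {q : ℝ} (hq : 1 ≤ q) (a h : ℕ → ℝ≥0∞) :
    (∑' n, a n * h n) ^ q ≤ (∑' n, a n) ^ (q - 1) * ∑' n, a n * h n ^ q := by
  simpa only [lintegral_count] using
    rpow_lintegral_mul_le (μ := Measure.count) hq (measurable_of_countable a)
      (measurable_of_countable h)

lemma ennreal_rpow_add_one (x : ℝ≥0∞) {y : ℝ} (hy : 0 ≤ y) : x ^ (y + 1) = x ^ y * x := by
  rw [ENNReal.rpow_add_of_nonneg _ _ hy zero_le_one, ENNReal.rpow_one]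

variable {E : Type*} [AddCommGroup E] [MeasurableSpace E] [MeasurableAdd₂ E] [MeasurableNeg E]
  {μ : Measure E} {a g : E → ℝ≥0∞} {s p q : ℝ}

/-- For a weight `a ≤ 1` the embeddings `L^p ⊆ L^s` and `ℓ^p ⊆ ℓ^q` hold at the scale of `a`. -/
lemma rpow_lintegral_sub_mul_le [μ.IsAddLeftInvariant] [μ.IsNegInvariant]
    (ha : Measurable a) (hg : Measurable g) (ha1 : ∀ u, a u ≤ 1) (hs : 0 < s) (hsp : s ≤ p)
    (hpq : p ≤ q) (z : E) :
    (∫⁻ w, a (z - w) * g w ^ s ∂μ) ^ (q / s) ≤ (∫⁻ u, a u ∂μ) ^ ((p / s - 1) * (q / p)) *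
      (∫⁻ w, g w ^ p ∂μ) ^ (q / p - 1) * ∫⁻ w, a (z - w) * g w ^ p ∂μ := by
  have hp : 0 < p := hs.trans_le hsp
  have hqp : 1 ≤ q / p := (one_le_div hp).2 hpq
  have hjensen := rpow_lintegral_mul_le (μ := μ) ((one_le_div hs).2 hsp)
    (ha.comp (measurable_id.const_sub z)) (hg.pow_const s)
  simp only [Function.comp_apply, id, lintegral_sub_left_eq_self a z, ← ENNReal.rpow_mul,
    mul_div_cancel₀ p hs.ne'] at hjensen
  calc (∫⁻ w, a (z - w) * g w ^ s ∂μ) ^ (q / s)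
      = ((∫⁻ w, a (z - w) * g w ^ s ∂μ) ^ (p / s)) ^ (q / p) := by
        rw [← ENNReal.rpow_mul]
        congr 1
        field_simp
    _ ≤ ((∫⁻ u, a u ∂μ) ^ (p / s - 1) * ∫⁻ w, a (z - w) * g w ^ p ∂μ) ^ (q / p) := by gcongr
    _ = (∫⁻ u, a u ∂μ) ^ ((p / s - 1) * (q / p)) *
        (∫⁻ w, a (z - w) * g w ^ p ∂μ) ^ (q / p - 1) * ∫⁻ w, a (z - w) * g w ^ p ∂μ := by
        rw [ENNReal.mul_rpow_of_nonneg _ _ (by positivity), ← ENNReal.rpow_mul, mul_assoc,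
          ← ennreal_rpow_add_one _ (by linarith), sub_add_cancel]
    _ ≤ _ := by
        gcongr with w
        exact mul_le_of_le_one_left' (ha1 _)

lemma measurable_mul_comp_sub (ha : Measurable a) (hg : Measurable g) :
    Measurable fun z : E × E ↦ a (z.1 - z.2) * g z.2 :=
  (ha.comp (measurable_fst.sub measurable_snd)).mul (hg.comp measurable_snd)

variable [SFinite μ]

lemma measurable_lintegral_sub_mul (ha : Measurable a) (hg : Measurable g) :
    Measurable fun z ↦ ∫⁻ w, a (z - w) * g w ∂μ :=
  (measurable_mul_comp_sub ha hg).lintegral_prod_right'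

lemma lintegral_lintegral_sub_mul [μ.IsAddLeftInvariant] (ha : Measurable a) (hg : Measurable g) :
    ∫⁻ z, ∫⁻ w, a (z - w) * g w ∂μ ∂μ = (∫⁻ u, a u ∂μ) * ∫⁻ w, g w ∂μ := by
  rw [lintegral_lintegral_swap (measurable_mul_comp_sub ha hg).aemeasurable,
    ← lintegral_const_mul _ hg]
  refine lintegral_congr fun w ↦ ?_
  rw [lintegral_mul_const, lintegral_sub_right_eq_self a]
  exact ha.comp (measurable_id.sub_const w)

lemma lintegral_rpow_lintegral_sub_mul_le [μ.IsAddLeftInvariant] [μ.IsNegInvariant]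
    (ha : Measurable a) (hg : Measurable g) (ha1 : ∀ u, a u ≤ 1) (hs : 0 < s) (hsp : s ≤ p)
    (hpq : p ≤ q) :
    ∫⁻ z, (∫⁻ w, a (z - w) * g w ^ s ∂μ) ^ (q / s) ∂μ ≤
      (∫⁻ u, a u ∂μ) ^ ((p / s - 1) * (q / p) + 1) * (∫⁻ w, g w ^ p ∂μ) ^ (q / p) := by
  have hp : 0 < p := hs.trans_le hsp
  have hps : 0 ≤ p / s - 1 := sub_nonneg.2 ((one_le_div hs).2 hsp)
  have hqp : 0 ≤ q / p - 1 := sub_nonneg.2 ((one_le_div hp).2 hpq)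
  have hqp' : 0 ≤ q / p := by linarith
  refine (lintegral_mono (rpow_lintegral_sub_mul_le ha hg ha1 hs hsp hpq)).trans_eq ?_
  rw [lintegral_const_mul _ (measurable_lintegral_sub_mul ha (hg.pow_const p)),
    lintegral_lintegral_sub_mul ha (hg.pow_const p), mul_mul_mul_comm,
    ← ennreal_rpow_add_one _ (by positivity), ← ennreal_rpow_add_one _ hqp,
    sub_add_cancel]

end Convolution

section Localization

variable {X T W : Type*} [MeasurableSpace X] [MeasurableSpace T] [MeasurableSpace W]

lemma measurable_sumNorm {τ : Measure T} [SFinite τ] {ν : Measure W} [SFinite ν] {A : ℝ≥0}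
    {m : ℕ → X → T → W → ℂ} (hm : ∀ j, IsSchurKernel τ ν A (m j)) {f : ℕ → W → ℂ}
    (hf : ∀ j, Measurable (f j)) (r : ℝ) : Measurable (sumNorm τ ν m r f) := by
  refine Measurable.tsum fun j ↦ ?_
  simp_rw [eLpNorm'_eq_lintegral_enorm]
  exact ((hm j).measurable_lintegral_kernelOp_rpow (hf j) r).pow_const _

lemma eLpNorm'_le_of_enorm_le {τ : Measure T} {r : ℝ} (hr : 0 < r) {g : T → ℂ} {B : ℝ≥0∞}
    (hg : ∀ t, ‖g t‖ₑ ≤ B) : eLpNorm' g r τ ≤ B * τ univ ^ (1 / r) := by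
  simpa only [eLpNorm'_const B hr, enorm_eq_self] using
    eLpNorm'_mono_enorm_ae (g := fun _ ↦ B) hr.le (.of_forall hg)

lemma tsum_two_rpow_neg_mul_ne_top {d : ℝ} (hd : 0 < d) :
    ∑' j : ℕ, (2 : ℝ≥0∞) ^ (-(j * d)) ≠ ∞ := by
  have hgeom (j : ℕ) : (2 : ℝ≥0∞) ^ (-(j * d)) = (2 ^ (-d)) ^ j := by
    rw [← ENNReal.rpow_natCast, ← ENNReal.rpow_mul]
    ring_nf
  simp_rw [hgeom, ENNReal.tsum_geometric]
  exact ENNReal.inv_ne_top.2 (tsub_pos_of_lt (two_rpow_lt_one (by linarith))).ne'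

variable {E : Type*} [NormedAddCommGroup E] [MeasurableSpace E]

/-- The function `∑ 2^{-jd} (η * |f_j|)`, which controls the contribution of the tails of the
kernels when these are dominated by `2^{-jd} η(x - w)`. -/
def tailSum (μ : Measure E) (η : E → ℝ≥0∞) (d : ℝ) (f : ℕ → E → ℂ) (x : E) : ℝ≥0∞ :=
  ∑' j : ℕ, 2 ^ (-(j * d)) * ∫⁻ w, η (x - w) * ‖f j w‖ₑ ∂μ

/-- The family `f` restricted to the closed ball of radius `R` around `z`. -/
def nearPart (R : ℝ) (z : E) (f : ℕ → E → ℂ) (j : ℕ) : E → ℂ :=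
  (closedBall z R).indicator (f j)

/-- The family `f` restricted to the complement of the closed ball of radius `R` around `z`. -/
def farPart (R : ℝ) (z : E) (f : ℕ → E → ℂ) (j : ℕ) : E → ℂ :=
  (closedBall z R)ᶜ.indicator (f j)

lemma scaleSum_nearPart (μ : Measure E) {ρ : ℝ} (hρ : 0 < ρ) (q d R : ℝ) (z : E) (f : ℕ → E → ℂ) :
    scaleSum μ ρ q d (nearPart R z f) = ∑' j : ℕ, 2 ^ (-(j * d)) *
      (∫⁻ w, (closedBall 0 R).indicator 1 (z - w) * ‖f j w‖ₑ ^ ρ ∂μ) ^ (q / ρ) := by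
  simp only [scaleSum, eLpNorm'_rpow]
  refine tsum_congr fun j ↦ ?_
  congr 2
  refine lintegral_congr fun w ↦ ?_
  by_cases hw : w ∈ closedBall z R
  · have : z - w ∈ closedBall (0 : E) R := by
      rwa [mem_closedBall_zero_iff, ← dist_eq_norm, dist_comm]
    simp [nearPart, hw, this]
  · have : z - w ∉ closedBall (0 : E) R := by
      rwa [mem_closedBall_zero_iff, ← dist_eq_norm, dist_comm]
    simp [nearPart, hw, this, hρ]

lemma enorm_kernelOp_farPart_le {S : Type*} {k : E → S → E → ℂ} {B : ℝ≥0∞} {R : ℝ}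
    {η : E → ℝ≥0∞} (hk : ∀ x t w, R ≤ ‖x - w‖ → ‖k x t w‖ₑ ≤ B * η (x - w)) [BorelSpace E]
    {μ : Measure E} {f : ℕ → E → ℂ} {j : ℕ} (hη : Measurable η) (hf : Measurable (f j)) {x z : E}
    (hx : x ∈ ball z 1) (t : S) :
    ‖kernelOp μ k (farPart (R + 1) z f j) x t‖ₑ ≤ B * ∫⁻ w, η (x - w) * ‖f j w‖ₑ ∂μ := by
  have hmeas : Measurable fun w ↦ η (x - w) * ‖f j w‖ₑ :=
    (hη.comp (measurable_id.const_sub x)).mul hf.enorm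
  refine (enorm_kernelOp_le _ _ _ _ _).trans ?_
  rw [← lintegral_const_mul _ hmeas]
  refine lintegral_mono fun w ↦ ?_
  by_cases hw : w ∈ closedBall z (R + 1)
  · simp [farPart, hw]
  · have hxw : R ≤ ‖x - w‖ := by
      rw [mem_closedBall, not_le] at hw
      have := dist_triangle w x z
      rw [← dist_eq_norm, dist_comm]
      linarith [mem_ball.1 hx]
    rw [farPart, indicator_of_mem (mem_compl hw), ← mul_assoc]
    gcongr
    exact hk x t w hxw

variable [NormedSpace ℝ E] [FiniteDimensional ℝ E] [BorelSpace E] {μ : Measure E}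
  [μ.IsAddHaarMeasure] {τ : Measure T} {A : ℝ≥0} {η : E → ℝ≥0∞} {m : ℕ → E → T → E → ℂ}
  {f : ℕ → E → ℂ} {ρ p q d R : ℝ} {K : ℝ≥0∞}

lemma measurable_tailSum (hη : Measurable η) (hf : ∀ j, Measurable (f j)) :
    Measurable (tailSum μ η d f) :=
  Measurable.tsum fun j ↦ (measurable_lintegral_sub_mul hη (hf j).enorm).const_mul _

lemma lintegral_tailSum_rpow_le (hη : Measurable η) (hη1 : ∀ u, η u ≤ 1)
    (hf : ∀ j, Measurable (f j)) (hp : 1 ≤ p) (hpq : p ≤ q) (hd : 0 < d) :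
    ∫⁻ x, tailSum μ η d f x ^ q ∂μ ≤ (∑' j : ℕ, (2 : ℝ≥0∞) ^ (-(j * d))) ^ (q - 1) *
      ((∫⁻ u, η u ∂μ) ^ ((p - 1) * (q / p) + 1) * scaleSum μ p q d f) := by
  have hq : 1 ≤ q := hp.trans hpq
  calc ∫⁻ x, tailSum μ η d f x ^ q ∂μ
      ≤ ∫⁻ x, (∑' j : ℕ, (2 : ℝ≥0∞) ^ (-(j * d))) ^ (q - 1) *
          ∑' j : ℕ, 2 ^ (-(j * d)) * (∫⁻ w, η (x - w) * ‖f j w‖ₑ ∂μ) ^ q ∂μ :=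
        lintegral_mono fun x ↦ rpow_tsum_mul_le hq _ _
    _ = (∑' j : ℕ, (2 : ℝ≥0∞) ^ (-(j * d))) ^ (q - 1) *
          ∑' j : ℕ, 2 ^ (-(j * d)) * ∫⁻ x, (∫⁻ w, η (x - w) * ‖f j w‖ₑ ∂μ) ^ q ∂μ := by
        have hmeas (j : ℕ) := (measurable_lintegral_sub_mul (μ := μ) hη (hf j).enorm).pow_const q
        rw [lintegral_const_mul' _ _ (ENNReal.rpow_ne_top_of_nonneg (by linarith)
          (tsum_two_rpow_neg_mul_ne_top hd)), lintegral_tsum fun j ↦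
            ((hmeas j).const_mul _).aemeasurable]
        simp_rw [lintegral_const_mul' _ _ (two_rpow_ne_top _)]
    _ ≤ _ := by
        rw [scaleSum, ← ENNReal.tsum_mul_left (a := (∫⁻ u, η u ∂μ) ^ _)]
        refine mul_le_mul_right (ENNReal.tsum_le_tsum fun j ↦ ?_) _
        rw [mul_left_comm, eLpNorm'_rpow]
        gcongr
        simpa only [div_one, ENNReal.rpow_one] using
          lintegral_rpow_lintegral_sub_mul_le (μ := μ) hη (hf j).enorm hη1 one_pos hp hpq

lemma lintegral_lintegral_sumNorm_nearPart_le (hm : HasSummedBound μ τ μ m ρ ρ q d K)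
    (hf : ∀ j, Measurable (f j)) (hfi : ∀ j, Integrable (f j) μ) (hρ : 0 < ρ) (hρp : ρ ≤ p)
    (hpq : p ≤ q) :
    ∫⁻ z, ∫⁻ x, sumNorm τ μ m ρ (nearPart R z f) x ^ q ∂μ ∂μ ≤
      K * (μ (closedBall 0 R) ^ ((p / ρ - 1) * (q / p) + 1) * scaleSum μ p q d f) := by
  set a : E → ℝ≥0∞ := (closedBall 0 R).indicator 1
  have ham : Measurable a := measurable_one.indicator measurableSet_closedBall
  have ha1 (u : E) : a u ≤ 1 := indicator_le_self' (by simp) u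
  have hmeas (j : ℕ) : Measurable fun z ↦ (∫⁻ w, a (z - w) * ‖f j w‖ₑ ^ ρ ∂μ) ^ (q / ρ) :=
    (measurable_lintegral_sub_mul ham ((hf j).enorm.pow_const ρ)).pow_const _
  calc ∫⁻ z, ∫⁻ x, sumNorm τ μ m ρ (nearPart R z f) x ^ q ∂μ ∂μ
      ≤ ∫⁻ z, K * scaleSum μ ρ q d (nearPart R z f) ∂μ := by
        gcongr with z
        exact hm _ (fun j ↦ (hf j).indicator measurableSet_closedBall)
          fun j ↦ (hfi j).indicator measurableSet_closedBall
    _ = K * ∑' j : ℕ, 2 ^ (-(j * d)) *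
          ∫⁻ z, (∫⁻ w, a (z - w) * ‖f j w‖ₑ ^ ρ ∂μ) ^ (q / ρ) ∂μ := by
        simp_rw [scaleSum_nearPart μ hρ]
        rw [lintegral_const_mul _ (Measurable.tsum fun j ↦ (hmeas j).const_mul _),
          lintegral_tsum fun j ↦ ((hmeas j).const_mul _).aemeasurable]
        simp_rw [lintegral_const_mul' _ _ (two_rpow_ne_top _)]
    _ ≤ _ := by
        rw [scaleSum, ← ENNReal.tsum_mul_left (a := μ (closedBall 0 R) ^ _)]
        refine mul_le_mul_right (ENNReal.tsum_le_tsum fun j ↦ ?_) _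
        rw [mul_left_comm, eLpNorm'_rpow, ← lintegral_indicator_one measurableSet_closedBall]
        gcongr
        exact lintegral_rpow_lintegral_sub_mul_le ham (hf j).enorm ha1 hρ hρp hpq

lemma sumNorm_le_nearPart_add_tailSum [SFinite τ] (hm : ∀ j, IsSchurKernel τ μ A (m j))
    (hη : Measurable η)
    (htail : ∀ (j : ℕ) x t w, R ≤ ‖x - w‖ → ‖m j x t w‖ₑ ≤ A * 2 ^ (-(j * d)) * η (x - w))
    (hf : ∀ j, Measurable (f j)) (hfi : ∀ j, Integrable (f j) μ) (hρ : 1 ≤ ρ) {x z : E}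
    (hx : x ∈ ball z 1) :
    sumNorm τ μ m ρ f x ≤ sumNorm τ μ m ρ (nearPart (R + 1) z f) x +
      A * τ univ ^ (1 / ρ) * tailSum μ η d f x := by
  rw [sumNorm, sumNorm, tailSum, ← ENNReal.tsum_mul_left, ← ENNReal.tsum_add]
  refine ENNReal.tsum_le_tsum fun j ↦ ?_
  have hS : MeasurableSet (closedBall z (R + 1)) := measurableSet_closedBall
  have hsplit : kernelOp μ (m j) (f j) x = kernelOp μ (m j) (nearPart (R + 1) z f j) x +
      kernelOp μ (m j) (farPart (R + 1) z f j) x := by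
    ext t
    have hadd := (hm j).kernelOp_add ((hfi j).indicator hS) ((hfi j).indicator hS.compl) x t
    rwa [indicator_self_add_compl] at hadd
  have hmeas {g : E → ℂ} (hg : Measurable g) : AEStronglyMeasurable (kernelOp μ (m j) g x) τ :=
    ((hm j).measurable_kernelOp_time hg x).aestronglyMeasurable
  have hnear : Measurable (nearPart (R + 1) z f j) := (hf j).indicator hS
  have hfar : Measurable (farPart (R + 1) z f j) := (hf j).indicator hS.compl
  rw [hsplit, mul_right_comm, ← mul_assoc]
  refine (eLpNorm'_add_le (hmeas hnear) (hmeas hfar) hρ).trans ?_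
  gcongr
  exact eLpNorm'_le_of_enorm_le (by linarith) (enorm_kernelOp_farPart_le (htail j) hη (hf j) hx)

/-- Averaging over `z` turns an estimate local to the unit balls `ball z 1` into a global one. -/
lemma measure_ball_mul_lintegral_le {G H : E → ℝ≥0∞} {N : E → E → ℝ≥0∞} (hG : Measurable G)
    (hH : Measurable H) (h : ∀ z, ∀ x ∈ ball z 1, G x ≤ N z x + H x) :
    μ (ball 0 1) * ∫⁻ x, G x ∂μ ≤ ∫⁻ z, ∫⁻ x, N z x ∂μ ∂μ + μ (ball 0 1) * ∫⁻ x, H x ∂μ := by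
  set a : E → ℝ≥0∞ := (ball 0 1).indicator 1
  have ham : Measurable a := measurable_one.indicator measurableSet_ball
  have haV : ∫⁻ u, a u ∂μ = μ (ball 0 1) := lintegral_indicator_one measurableSet_ball
  rw [← haV, ← lintegral_lintegral_sub_mul ham hG, ← lintegral_lintegral_sub_mul ham hH,
    ← lintegral_add_right _ (measurable_lintegral_sub_mul ham hH)]
  refine lintegral_mono fun z ↦ ?_
  have hmeas : Measurable fun x ↦ a (z - x) * H x := (ham.comp (measurable_id.const_sub z)).mul hH
  rw [← lintegral_add_right _ hmeas]
  refine lintegral_mono fun x ↦ ?_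
  by_cases hx : z - x ∈ ball (0 : E) 1
  · have hxz : x ∈ ball z 1 := by
      rwa [mem_ball_zero_iff, ← dist_eq_norm, dist_comm] at hx
    simpa [a, hx] using h z x hxz
  · simp [a, hx]

lemma measure_ball_mul_lintegral_sumNorm_rpow_le [SFinite τ]
    (hm : ∀ j, IsSchurKernel τ μ A (m j)) (hη : Measurable η)
    (htail : ∀ (j : ℕ) x t w, R ≤ ‖x - w‖ → ‖m j x t w‖ₑ ≤ A * 2 ^ (-(j * d)) * η (x - w))
    (hf : ∀ j, Measurable (f j)) (hfi : ∀ j, Integrable (f j) μ) (hρ : 1 ≤ ρ) (hq : 1 ≤ q) :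
    μ (ball 0 1) * ∫⁻ x, sumNorm τ μ m ρ f x ^ q ∂μ ≤
      2 ^ (q - 1) * ∫⁻ z, ∫⁻ x, sumNorm τ μ m ρ (nearPart (R + 1) z f) x ^ q ∂μ ∂μ +
      μ (ball 0 1) * (2 ^ (q - 1) * (A * τ univ ^ (1 / ρ)) ^ q *
        ∫⁻ x, tailSum μ η d f x ^ q ∂μ) := by
  have htailm : Measurable fun x ↦ tailSum μ η d f x ^ q := (measurable_tailSum hη hf).pow_const q
  rw [← lintegral_const_mul _ htailm, ← lintegral_const_mul' _ _ (two_rpow_ne_top _)]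
  simp_rw [← lintegral_const_mul' _ _ (two_rpow_ne_top _)]
  refine measure_ball_mul_lintegral_le ((measurable_sumNorm hm hf ρ).pow_const q)
    (htailm.const_mul _) fun z x hx ↦ ?_
  calc sumNorm τ μ m ρ f x ^ q
      ≤ (sumNorm τ μ m ρ (nearPart (R + 1) z f) x +
          A * τ univ ^ (1 / ρ) * tailSum μ η d f x) ^ q := by
        gcongr
        exact sumNorm_le_nearPart_add_tailSum hm hη htail hf hfi hρ hx
    _ ≤ _ := ENNReal.rpow_add_le_mul_rpow_add_rpow _ _ hq
    _ = _ := by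
        rw [ENNReal.mul_rpow_of_nonneg _ (tailSum μ η d f x) (by linarith)]
        ring

theorem exists_hasSummedBound_of_le (μ : Measure E) [μ.IsAddHaarMeasure] (τ : Measure T)
    [IsFiniteMeasure τ] (A : ℝ≥0) (R : ℝ) (hη : Measurable η) (hη1 : ∀ u, η u ≤ 1)
    (hηi : ∫⁻ u, η u ∂μ ≠ ∞) (hρ : 1 ≤ ρ) (hρp : ρ ≤ p) (hpq : p ≤ q) (hd : 0 < d) :
    ∃ K' : ℝ≥0, ∀ m : ℕ → E → T → E → ℂ, (∀ j, IsSchurKernel τ μ A (m j)) →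
      (∀ (j : ℕ) x t w, R ≤ ‖x - w‖ → ‖m j x t w‖ₑ ≤ A * 2 ^ (-(j * d)) * η (x - w)) →
      ∀ K, HasSummedBound μ τ μ m ρ ρ q d K →
        HasSummedBound μ τ μ m p ρ q d (K' * (1 + K)) := by
  have hp : 1 ≤ p := hρ.trans hρp
  have hq : 1 ≤ q := hp.trans hpq
  have hpρ : 0 ≤ p / ρ - 1 := sub_nonneg.2 ((one_le_div (by linarith)).2 hρp)
  set V := μ (ball 0 1)
  have hV : V ≠ 0 := (measure_ball_pos μ _ one_pos).ne'
  have hV' : V ≠ ∞ := measure_ball_lt_top.ne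
  set c₁ := V⁻¹ * (2 ^ (q - 1) * μ (closedBall 0 (R + 1)) ^ ((p / ρ - 1) * (q / p) + 1))
  set c₂ := 2 ^ (q - 1) * (A * τ univ ^ (1 / ρ)) ^ q *
    ((∑' j : ℕ, (2 : ℝ≥0∞) ^ (-(j * d))) ^ (q - 1) * (∫⁻ u, η u ∂μ) ^ ((p - 1) * (q / p) + 1))
  have hc : c₁ + c₂ ≠ ∞ := by
    have hgeom := tsum_two_rpow_neg_mul_ne_top hd
    have hexp₁ : 0 ≤ (p / ρ - 1) * (q / p) + 1 := by positivity
    have hexp₂ : 0 ≤ (p - 1) * (q / p) + 1 := by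
      have : 0 ≤ p - 1 := by linarith
      positivity
    have hq' : 0 ≤ q - 1 := by linarith
    have hρ' : 0 ≤ 1 / ρ := by positivity
    have hball : μ (closedBall 0 (R + 1)) ≠ ∞ := measure_closedBall_lt_top.ne
    finiteness
  refine ⟨(c₁ + c₂).toNNReal, fun m hm htail K hK f hf hfi ↦ ?_⟩
  rw [ENNReal.coe_toNNReal hc]
  have hmain := (measure_ball_mul_lintegral_sumNorm_rpow_le hm hη htail hf hfi hρ hq).trans
    (add_le_add (mul_le_mul_right (lintegral_lintegral_sumNorm_nearPart_le hK hf hfi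
      (by linarith) hρp hpq) _) (mul_le_mul_right (mul_le_mul_right
        (lintegral_tailSum_rpow_le hη hη1 hf hp hpq hd) _) _))
  calc ∫⁻ x, sumNorm τ μ m ρ f x ^ q ∂μ
      = V⁻¹ * (V * ∫⁻ x, sumNorm τ μ m ρ f x ^ q ∂μ) := by
        rw [← mul_assoc, ENNReal.inv_mul_cancel hV hV', one_mul]
    _ ≤ V⁻¹ * _ := mul_le_mul_right hmain _
    _ = (c₁ * K + V⁻¹ * V * c₂) * scaleSum μ p q d f := by ring
    _ ≤ (c₁ + c₂) * (1 + K) * scaleSum μ p q d f := by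
        rw [ENNReal.inv_mul_cancel hV hV', one_mul]
        gcongr
        calc c₁ * K + c₂ ≤ c₁ * K + c₂ + (c₁ + c₂ * K) := le_self_add
          _ = (c₁ + c₂) * (1 + K) := by ring

end Localization

section Multipliers

variable {V : Type*} [NormedAddCommGroup V] [InnerProductSpace ℝ V] [FiniteDimensional ℝ V]
  [MeasurableSpace V] [BorelSpace V]

lemma fourier_eq_zero_of_not_integrable {F : Type*} [NormedAddCommGroup F] [NormedSpace ℂ F]
    {f : V → F} (hf : ¬ Integrable f) : 𝓕 f = 0 := by
  funext ξ
  rw [Real.fourier_eq]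
  exact integral_undef fun h ↦ hf ((Real.fourierIntegral_convergent_iff ξ).1 h)

lemma fourierInv_sub_of_integrable {F : Type*} [NormedAddCommGroup F] [NormedSpace ℂ F]
    {f g : V → F} (hf : Integrable f) (hg : Integrable g) : 𝓕⁻ (f - g) = 𝓕⁻ f - 𝓕⁻ g := by
  have hconv {h : V → F} (hh : Integrable h) (u : V) :
      Integrable fun v ↦ 𝐞 (inner ℝ v u) • h v := by
    simpa using (Real.fourierIntegral_convergent_iff (-u)).2 hh
  funext u
  simp only [Real.fourierInv_eq, Pi.sub_apply, smul_sub]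
  exact integral_sub (hconv hf u) (hconv hg u)

lemma fourierInv_smul_fourier {F : Type*} [NormedAddCommGroup F] [NormedSpace ℂ F]
    [CompleteSpace F] {Ψ : V → ℂ} {f : V → F} (hΨ : Integrable Ψ) (hf : Integrable f) (z : V) :
    𝓕⁻ (fun ξ ↦ Ψ ξ • 𝓕 f ξ) z = ∫ w, 𝓕⁻ Ψ (z - w) • f w := by
  have hmod : Integrable fun ξ ↦ 𝐞 (inner ℝ ξ z) • Ψ ξ := by
    simpa using (Real.fourierIntegral_convergent_iff (-z)).2 hΨ
  have hflip := VectorFourier.integral_fourierIntegral_smul_eq_flip (e := 𝐞) (μ := volume)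
    (ν := volume) (L := innerₗ V) Real.continuous_fourierChar
    (by simpa using continuous_inner) hmod hf
  calc 𝓕⁻ (fun ξ ↦ Ψ ξ • 𝓕 f ξ) z = ∫ ξ, (𝐞 (inner ℝ ξ z) • Ψ ξ) • 𝓕 f ξ := by
        simp only [Real.fourierInv_eq, smul_assoc]
    _ = ∫ w, VectorFourier.fourierIntegral 𝐞 volume (innerₗ V)
          (fun ξ ↦ 𝐞 (inner ℝ ξ z) • Ψ ξ) w • f w := by
        rw [hflip]
        congr with ξ
        simp [Real.fourier_eq, VectorFourier.fourierIntegral, real_inner_comm]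
    _ = ∫ w, 𝓕⁻ Ψ (z - w) • f w := by
        congr with w
        congr 1
        rw [Real.fourierInv_eq]
        refine integral_congr_ae (.of_forall fun ξ ↦ ?_)
        simp only [innerₗ_apply_apply, smul_smul, ← AddChar.map_add_eq_mul, inner_sub_right]
        congr 2
        ring

end Multipliers

section Dilation

variable {E : Type*} [NormedAddCommGroup E] [NormedSpace ℝ E] {a : ℝ} {k : E → ℂ}

/-- The `L¹`-normalized dilate `a^n k(a u)` of a function `k` on an `n`-dimensional space. -/
def dilation (a : ℝ) (k : E → ℂ) (u : E) : ℂ :=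
  (a ^ Module.finrank ℝ E : ℝ) * k (a • u)

lemma continuous_dilation (hk : Continuous k) : Continuous (dilation a k) :=
  continuous_const.mul (hk.comp (continuous_const_smul a))

lemma norm_pow_mul_norm_dilation_le (ha : 0 < a) {N : ℕ} {C : ℝ}
    (hk : ∀ u, ‖u‖ ^ N * ‖k u‖ ≤ C) (u : E) :
    ‖u‖ ^ N * ‖dilation a k u‖ ≤ C * (a ^ Module.finrank ℝ E / a ^ N) := by
  have hau := hk (a • u)
  rw [norm_smul, Real.norm_of_nonneg ha.le, mul_pow] at hau
  rw [dilation, norm_mul, Complex.norm_real, Real.norm_of_nonneg (by positivity)]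
  calc ‖u‖ ^ N * (a ^ Module.finrank ℝ E * ‖k (a • u)‖)
      = (a ^ N * ‖u‖ ^ N * ‖k (a • u)‖) * (a ^ Module.finrank ℝ E / a ^ N) := by field_simp
    _ ≤ C * (a ^ Module.finrank ℝ E / a ^ N) := by gcongr

variable [FiniteDimensional ℝ E] [MeasurableSpace E] [BorelSpace E]

lemma lintegral_enorm_dilation (μ : Measure E) [μ.IsAddHaarMeasure] (ha : 0 < a)
    (hk : Measurable k) : ∫⁻ u, ‖dilation a k u‖ₑ ∂μ = ∫⁻ u, ‖k u‖ₑ ∂μ := by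
  have hscale : ∫⁻ u, ‖k (a • u)‖ₑ ∂μ =
      ENNReal.ofReal (a ^ Module.finrank ℝ E)⁻¹ * ∫⁻ u, ‖k u‖ₑ ∂μ := by
    rw [← lintegral_map hk.enorm (measurable_const_smul a),
      Measure.map_addHaar_smul μ ha.ne', lintegral_smul_measure, abs_of_pos (by positivity),
      smul_eq_mul]
  simp only [dilation, enorm_mul]
  rw [lintegral_const_mul' _ _ enorm_ne_top, hscale, ← mul_assoc, ← ofReal_norm, Complex.norm_real,
    Real.norm_of_nonneg (by positivity), ← ENNReal.ofReal_mul (by positivity),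
    mul_inv_cancel₀ (by positivity), ENNReal.ofReal_one, one_mul]

lemma fourierInv_comp_inv_smul {V : Type*} [NormedAddCommGroup V] [InnerProductSpace ℝ V]
    [FiniteDimensional ℝ V] [MeasurableSpace V] [BorelSpace V] (Φ : V → ℂ) (ha : 0 < a) :
    𝓕⁻ (fun ξ ↦ Φ (a⁻¹ • ξ)) = dilation a (𝓕⁻ Φ) := by
  funext u
  have hscale := Measure.integral_comp_inv_smul volume
    (fun ξ ↦ 𝐞 (inner ℝ ξ (a • u)) • Φ ξ) a
  rw [abs_of_pos (by positivity), Complex.real_smul] at hscale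
  rw [dilation, Real.fourierInv_eq, Real.fourierInv_eq, ← hscale]
  congr with ξ
  simp [inner_smul_left, inner_smul_right, ha.ne']

end Dilation

section FrequencyKernel

variable {E : Type*} [NormedAddCommGroup E] [NormedSpace ℝ E] {k : E → ℂ}

/-- The convolution kernel of the frequency localization `L_j`, where `k` is the inverse Fourier
transform of the base symbol `β₀(|ξ|)`. -/
def freqKernel (k : E → ℂ) : ℕ → E → ℂ
  | 0 => dilation (2 ^ 0) k
  | j + 1 => dilation (2 ^ (j + 1)) k - dilation (2 ^ j) k

lemma continuous_freqKernel (hk : Continuous k) (j : ℕ) : Continuous (freqKernel k j) := by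
  cases j with
  | zero => exact continuous_dilation hk
  | succ j => exact (continuous_dilation hk).sub (continuous_dilation hk)

lemma norm_pow_mul_norm_freqKernel_le {N : ℕ} {C : ℝ} (hk : ∀ u, ‖u‖ ^ N * ‖k u‖ ≤ C) (j : ℕ)
    (u : E) : ‖u‖ ^ N * ‖freqKernel k j u‖ ≤
      C * (1 + 2 ^ N) * ((2 ^ j) ^ Module.finrank ℝ E / (2 ^ j) ^ N) := by
  have hC : 0 ≤ C := (by positivity : 0 ≤ ‖u‖ ^ N * ‖k u‖).trans (hk u)
  cases j with
  | zero =>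
    calc _ ≤ C * ((2 ^ 0) ^ Module.finrank ℝ E / (2 ^ 0) ^ N) :=
          norm_pow_mul_norm_dilation_le (by positivity) hk u
      _ ≤ _ := by
          gcongr
          exact le_mul_of_one_le_right hC (le_add_of_nonneg_right (by positivity))
  | succ j =>
    calc _ ≤ ‖u‖ ^ N * ‖dilation (2 ^ (j + 1)) k u‖ + ‖u‖ ^ N * ‖dilation (2 ^ j) k u‖ := by
          rw [← mul_add]
          gcongr
          exact norm_sub_le _ _
      _ ≤ C * ((2 ^ (j + 1)) ^ Module.finrank ℝ E / (2 ^ (j + 1)) ^ N) +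
          C * ((2 ^ j) ^ Module.finrank ℝ E / (2 ^ j) ^ N) :=
        add_le_add (norm_pow_mul_norm_dilation_le (by positivity) hk u)
          (norm_pow_mul_norm_dilation_le (by positivity) hk u)
      _ ≤ C * ((2 ^ (j + 1)) ^ Module.finrank ℝ E / (2 ^ (j + 1)) ^ N) +
          C * ((2 ^ (j + 1)) ^ Module.finrank ℝ E / (2 ^ j) ^ N) := by
        gcongr
        · norm_num
        · omega
      _ = _ := by
        rw [pow_succ 2 j, mul_pow _ _ N]
        field_simp

lemma lintegral_enorm_freqKernel_le [FiniteDimensional ℝ E] [MeasurableSpace E] [BorelSpace E]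
    (μ : Measure E) [μ.IsAddHaarMeasure] (hk : Continuous k) (j : ℕ) :
    ∫⁻ u, ‖freqKernel k j u‖ₑ ∂μ ≤ 2 * ∫⁻ u, ‖k u‖ₑ ∂μ := by
  have hdil (n : ℕ) : ∫⁻ u, ‖dilation (2 ^ n) k u‖ₑ ∂μ = ∫⁻ u, ‖k u‖ₑ ∂μ :=
    lintegral_enorm_dilation μ (by positivity) hk.measurable
  cases j with
  | zero => exact (hdil 0).le.trans (le_mul_of_one_le_left zero_le one_le_two)
  | succ j =>
    calc _ ≤ ∫⁻ u, (‖dilation (2 ^ (j + 1)) k u‖ₑ + ‖dilation (2 ^ j) k u‖ₑ) ∂μ :=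
          lintegral_mono fun u ↦ enorm_sub_le
      _ = _ := by
          rw [lintegral_add_left (continuous_dilation hk).measurable.enorm, hdil, hdil, two_mul]

end FrequencyKernel

section FrequencyLocalization

variable {β₀ : ℝ → ℝ}

section RadialBump

variable {V : Type*} [NormedAddCommGroup V]

lemma betaJ_succ_norm [NormedSpace ℝ V] (β₀ : ℝ → ℝ) (j : ℕ) (ξ : V) :
    betaJ β₀ (j + 1) ‖ξ‖ =
      β₀ ‖((2 : ℝ) ^ (j + 1))⁻¹ • ξ‖ - β₀ ‖((2 : ℝ) ^ j)⁻¹ • ξ‖ := by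
  simp only [betaJ, norm_smul, norm_zpow, Real.norm_ofNat, ← zpow_natCast, ← zpow_neg]
  push_cast
  rfl

lemma IsBump.hasCompactSupport_comp_norm [NormedSpace ℝ V] [FiniteDimensional ℝ V]
    (hβ : IsBump β₀) : HasCompactSupport fun ξ : V ↦ (β₀ ‖ξ‖ : ℂ) := by
  refine .intro (isCompact_closedBall (0 : V) 1) fun ξ hξ ↦ ?_
  rw [hβ.2.2 _ (by simpa using hξ), Complex.ofReal_zero]

lemma IsBump.contDiff_comp_norm [InnerProductSpace ℝ V] (hβ : IsBump β₀) :
    ContDiff ℝ (⊤ : ℕ∞) fun ξ : V ↦ (β₀ ‖ξ‖ : ℂ) := by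
  refine Complex.ofRealCLM.contDiff.comp (contDiff_iff_contDiffAt.2 fun ξ ↦ ?_)
  rcases eq_or_ne ξ 0 with rfl | hξ
  · have hone : (fun ξ : V ↦ β₀ ‖ξ‖) =ᶠ[nhds 0] fun _ ↦ 1 := by
      filter_upwards [ball_mem_nhds (0 : V) one_half_pos] with ξ hξ
      exact hβ.2.1 _ (by simpa using hξ)
    exact contDiffAt_const.congr_of_eventuallyEq hone
  · exact hβ.1.contDiffAt.comp ξ (contDiffAt_norm ℝ hξ)

variable [InnerProductSpace ℝ V] [FiniteDimensional ℝ V] [MeasurableSpace V] [BorelSpace V]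

lemma IsBump.exists_schwartzMap_eq_fourierInv (hβ : IsBump β₀) :
    ∃ k : SchwartzMap V ℂ, ⇑k = 𝓕⁻ fun ξ : V ↦ (β₀ ‖ξ‖ : ℂ) :=
  ⟨𝓕⁻ (hβ.hasCompactSupport_comp_norm.toSchwartzMap hβ.contDiff_comp_norm),
    SchwartzMap.fourierInv_coe _⟩

lemma IsBump.integrable_comp_norm_inv_smul (hβ : IsBump β₀) (n : ℕ) :
    Integrable fun ξ : V ↦ (β₀ ‖((2 : ℝ) ^ n)⁻¹ • ξ‖ : ℂ) :=
  (hβ.contDiff_comp_norm.continuous.integrable_of_hasCompactSupport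
    (hβ.hasCompactSupport_comp_norm (V := V))).comp_smul (by positivity)

lemma IsBump.integrable_betaJ_norm (hβ : IsBump β₀) (j : ℕ) :
    Integrable fun ξ : V ↦ (betaJ β₀ j ‖ξ‖ : ℂ) := by
  cases j with
  | zero => simpa [betaJ] using hβ.integrable_comp_norm_inv_smul (V := V) 0
  | succ j =>
    simp only [betaJ_succ_norm, Complex.ofReal_sub]
    exact (hβ.integrable_comp_norm_inv_smul _).sub (hβ.integrable_comp_norm_inv_smul _)

lemma IsBump.fourierInv_betaJ_norm (hβ : IsBump β₀) (j : ℕ) :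
    𝓕⁻ (fun ξ : V ↦ (betaJ β₀ j ‖ξ‖ : ℂ)) = freqKernel (𝓕⁻ fun ξ : V ↦ (β₀ ‖ξ‖ : ℂ)) j := by
  have hdil (n : ℕ) := fourierInv_comp_inv_smul (fun ξ : V ↦ (β₀ ‖ξ‖ : ℂ))
    (a := (2 : ℝ) ^ n) (by positivity)
  cases j with
  | zero =>
    rw [freqKernel, ← hdil]
    simp [betaJ]
  | succ j =>
    rw [freqKernel, ← hdil, ← hdil, ← fourierInv_sub_of_integrable
      (hβ.integrable_comp_norm_inv_smul _) (hβ.integrable_comp_norm_inv_smul _)]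
    congr with ξ
    simp [betaJ_succ_norm]

end RadialBump

variable {d : ℕ} {f : Euc d → ℂ}

lemma IsBump.freqLoc_eq_integral_freqKernel (hβ : IsBump β₀) (hf : Integrable f) (j : ℕ)
    (z : Euc d) : freqLoc d β₀ j f z =
      ∫ w, freqKernel (𝓕⁻ fun ξ : Euc d ↦ (β₀ ‖ξ‖ : ℂ)) j (z - w) * f w := by
  rw [← hβ.fourierInv_betaJ_norm]
  exact fourierInv_smul_fourier (hβ.integrable_betaJ_norm j) hf z

/-- Junk values: the Fourier integral of a non-integrable function is `0`. -/
lemma Aj_eq_zero_of_not_integrable (χ : ℝ → ℝ) (hf : ¬ Integrable f) (j : ℕ) :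
    Aj d χ β₀ j f = 0 := by
  funext x t
  simp [Aj, sphAvg, freqLoc, fourier_eq_zero_of_not_integrable hf, Real.fourierInv_eq]

end FrequencyLocalization

section PolarCoordinates

variable {E : Type*} [NormedAddCommGroup E] [NormedSpace ℝ E] [FiniteDimensional ℝ E]
  [MeasurableSpace E] [BorelSpace E] (μ : Measure E) [μ.IsAddHaarMeasure] {g : E → ℝ≥0∞}

lemma lintegral_compl_zero_eq_lintegral_toSphere (hg : Measurable g) :
    ∫⁻ z in {0}ᶜ, g z ∂μ = ∫⁻ y : sphere (0 : E) 1, (∫⁻ r in Ioi (0 : ℝ),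
      ENNReal.ofReal (r ^ (Module.finrank ℝ E - 1)) * g (r • (y : E))) ∂μ.toSphere := by
  have hgpolar : Measurable fun z : sphere (0 : E) 1 × Ioi (0 : ℝ) ↦ g (z.2.1 • z.1.1) := by
    fun_prop
  calc ∫⁻ z in {0}ᶜ, g z ∂μ = ∫⁻ z : ({0}ᶜ : Set E), g z ∂(μ.comap Subtype.val) :=
        (lintegral_subtype_comap (measurableSet_singleton _).compl _).symm
    _ = ∫⁻ z, g (z.2.1 • z.1.1)
          ∂(μ.toSphere.prod (Measure.volumeIoiPow (Module.finrank ℝ E - 1))) := by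
        rw [← μ.measurePreserving_homeomorphUnitSphereProd.lintegral_comp hgpolar]
        refine lintegral_congr fun z ↦ ?_
        simp [smul_smul, norm_ne_zero_iff.2 z.2]
    _ = _ := by
        rw [lintegral_prod _ hgpolar.aemeasurable]
        refine lintegral_congr fun y ↦ ?_
        rw [Measure.volumeIoiPow, lintegral_withDensity_eq_lintegral_mul _ (by fun_prop)
          (g := fun r : Ioi (0 : ℝ) ↦ g (r.1 • y.1)) (by fun_prop),
          ← lintegral_subtype_comap measurableSet_Ioi]
        rfl

lemma lintegral_toSphere_Ici_le {a : ℝ} (ha : 0 < a) (hg : Measurable g) :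
    ∫⁻ y : sphere (0 : E) 1, (∫⁻ t in Ici a, g (t • (y : E))) ∂μ.toSphere ≤
      ENNReal.ofReal (a⁻¹ ^ (Module.finrank ℝ E - 1)) * ∫⁻ z, g z ∂μ := by
  set n := Module.finrank ℝ E - 1
  calc _ ≤ ∫⁻ y : sphere (0 : E) 1, ENNReal.ofReal (a⁻¹ ^ n) * (∫⁻ r in Ioi (0 : ℝ),
        ENNReal.ofReal (r ^ n) * g (r • (y : E))) ∂μ.toSphere := by
        gcongr with y
        rw [← lintegral_const_mul' _ _ ENNReal.ofReal_ne_top]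
        refine (setLIntegral_mono' measurableSet_Ici fun t ht ↦ ?_).trans
          (lintegral_mono_set fun t ht ↦ ha.trans_le ht)
        rw [← mul_assoc, ← ENNReal.ofReal_mul (by positivity), ← mul_pow]
        refine le_mul_of_one_le_left zero_le (ENNReal.one_le_ofReal.2 (one_le_pow₀ ?_))
        rwa [inv_mul_eq_div, one_le_div ha]
    _ = ENNReal.ofReal (a⁻¹ ^ n) * ∫⁻ z in {0}ᶜ, g z ∂μ := by
        rw [lintegral_const_mul' _ _ ENNReal.ofReal_ne_top,
          lintegral_compl_zero_eq_lintegral_toSphere μ hg]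
    _ ≤ _ := by
        gcongr
        exact Measure.restrict_le_self

end PolarCoordinates

section SphereMeasure

variable {d : ℕ}

lemma ae_sphereMeasure_norm_eq_one : ∀ᵐ y ∂sphereMeasure d, ‖y‖ = 1 := by
  refine Measure.ae_smul_measure ?_ _
  rw [ae_map_iff measurable_subtype_coe.aemeasurable
    (measurableSet_eq_fun measurable_norm measurable_const)]
  exact .of_forall fun y ↦ by simp

variable [NeZero d]

lemma toSphere_volume_univ_ne_zero : (volume : Measure (Euc d)).toSphere univ ≠ 0 := by
  rw [Ne, Measure.measure_univ_eq_zero]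
  exact Measure.toSphere_ne_zero _

instance isProbabilityMeasure_sphereMeasure : IsProbabilityMeasure (sphereMeasure d) := by
  constructor
  rw [sphereMeasure, Measure.smul_apply, Measure.map_apply measurable_subtype_coe .univ,
    preimage_univ, smul_eq_mul]
  exact ENNReal.inv_mul_cancel toSphere_volume_univ_ne_zero (measure_ne_top _ _)

lemma exists_lintegral_Ici_lintegral_sphereMeasure_le {a : ℝ} (ha : 0 < a) :
    ∃ K : ℝ≥0, ∀ g : Euc d → ℝ≥0∞, Measurable g →
      ∫⁻ t in Ici a, ∫⁻ y, g (t • y) ∂sphereMeasure d ≤ K * ∫⁻ z, g z := by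
  set c := ((volume : Measure (Euc d)).toSphere univ)⁻¹
  have hc : c ≠ ∞ := ENNReal.inv_ne_top.2 toSphere_volume_univ_ne_zero
  refine ⟨(c * ENNReal.ofReal (a⁻¹ ^ (Module.finrank ℝ (Euc d) - 1))).toNNReal, fun g hg ↦ ?_⟩
  rw [ENNReal.coe_toNNReal (by finiteness)]
  have hpolar : Measurable fun z : ℝ × sphere (0 : Euc d) 1 ↦ g (z.1 • z.2.1) := by fun_prop
  calc ∫⁻ t in Ici a, ∫⁻ y, g (t • y) ∂sphereMeasure d
      = ∫⁻ t in Ici a, c * ∫⁻ y : sphere (0 : Euc d) 1, g (t • y.1) ∂volume.toSphere := by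
        refine lintegral_congr fun t ↦ ?_
        rw [sphereMeasure, lintegral_smul_measure,
          lintegral_map (f := fun y ↦ g (t • y)) (by fun_prop) measurable_subtype_coe, smul_eq_mul]
    _ = c * ∫⁻ y : sphere (0 : Euc d) 1, (∫⁻ t in Ici a, g (t • y.1)) ∂volume.toSphere := by
        rw [lintegral_const_mul' _ _ hc, lintegral_lintegral_swap hpolar.aemeasurable]
    _ ≤ _ := by
        rw [mul_assoc]
        gcongr
        exact lintegral_toSphere_Ici_le volume ha hg

end SphereMeasure

section SphericalKernel

variable {d : ℕ} {χ : ℝ → ℝ} {B : ℝ≥0} {K : Euc d → ℂ} {M : ℝ}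

/-- The kernel of `f ↦ χ(t) A_t(K * f)(x)`, the spherical average of a convolution. -/
def sphAvgKernel (χ : ℝ → ℝ) (K : Euc d → ℂ) (x : Euc d) (t : ℝ) (w : Euc d) : ℂ :=
  (χ t : ℂ) * ∫ y, K (x - t • y - w) ∂sphereMeasure d

lemma enorm_sphAvgKernel_le (hB : ∀ t, ‖χ t‖ₑ ≤ B) (K : Euc d → ℂ) (x : Euc d) (t : ℝ)
    (w : Euc d) : ‖sphAvgKernel χ K x t w‖ₑ ≤
      B * ∫⁻ y, ‖K (x - t • y - w)‖ₑ ∂sphereMeasure d := by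
  rw [sphAvgKernel, enorm_mul, ← ofReal_norm, Complex.norm_real, ofReal_norm]
  gcongr
  exacts [hB t, enorm_integral_le_lintegral_enorm _]

variable [NeZero d]

lemma norm_sphAvgKernel_le (hB : ∀ t, ‖χ t‖ₑ ≤ B) (hM : ∀ u, ‖K u‖ ≤ M) (x : Euc d) (t : ℝ)
    (w : Euc d) : ‖sphAvgKernel χ K x t w‖ ≤ B * M := by
  have hBt : ‖χ t‖ ≤ B := enorm_le_coe.1 (hB t)
  rw [sphAvgKernel, norm_mul, Complex.norm_real]
  gcongr
  simpa using norm_integral_le_of_norm_le_const (μ := sphereMeasure d)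
    (.of_forall fun y ↦ hM (x - t • y - w))

lemma measurable_sphAvgKernel (hχ : Measurable χ) (hK : Continuous K) :
    Measurable fun z : (Euc d × ℝ) × Euc d ↦ sphAvgKernel χ K z.1.1 z.1.2 z.2 := by
  have hcont : Continuous fun z : ((Euc d × ℝ) × Euc d) × Euc d ↦
      K (z.1.1.1 - z.1.1.2 • z.2 - z.1.2) := hK.comp (by fun_prop)
  exact (Complex.measurable_ofReal.comp (hχ.comp (by fun_prop))).mul
    (hcont.stronglyMeasurable.integral_prod_right' (ν := sphereMeasure d)).measurable

lemma lintegral_input_sphAvgKernel_le (hB : ∀ t, ‖χ t‖ₑ ≤ B) (hK : Continuous K) (x : Euc d)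
    (t : ℝ) : ∫⁻ w, ‖sphAvgKernel χ K x t w‖ₑ ≤ B * ∫⁻ u, ‖K u‖ₑ := by
  have hcont : Continuous fun z : Euc d × Euc d ↦ K (x - t • z.2 - z.1) := hK.comp (by fun_prop)
  calc _ ≤ ∫⁻ w, B * ∫⁻ y, ‖K (x - t • y - w)‖ₑ ∂sphereMeasure d :=
        lintegral_mono fun w ↦ enorm_sphAvgKernel_le hB K x t w
    _ = B * ∫⁻ y, (∫⁻ w, ‖K (x - t • y - w)‖ₑ) ∂sphereMeasure d := by
        rw [lintegral_const_mul' _ _ ENNReal.coe_ne_top,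
          lintegral_lintegral_swap hcont.measurable.enorm.aemeasurable]
    _ = B * ∫⁻ u, ‖K u‖ₑ := by
        simp_rw [lintegral_sub_left_eq_self fun u ↦ ‖K u‖ₑ]
        simp

lemma exists_lintegral_time_sphAvgKernel_le {a : ℝ} (ha : 0 < a) (hB : ∀ t, ‖χ t‖ₑ ≤ B) :
    ∃ P : ℝ≥0, ∀ K : Euc d → ℂ, Continuous K → ∀ x w : Euc d,
      ∫⁻ t in Ici a, ‖sphAvgKernel χ K x t w‖ₑ ≤ P * ∫⁻ u, ‖K u‖ₑ := by
  obtain ⟨P, hP⟩ := exists_lintegral_Ici_lintegral_sphereMeasure_le (d := d) ha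
  refine ⟨B * P, fun K hK x w ↦ ?_⟩
  calc _ ≤ ∫⁻ t in Ici a, B * ∫⁻ y, ‖K (x - t • y - w)‖ₑ ∂sphereMeasure d :=
        lintegral_mono fun t ↦ enorm_sphAvgKernel_le hB K x t w
    _ ≤ B * (P * ∫⁻ z, ‖K (x - z - w)‖ₑ) := by
        rw [lintegral_const_mul' _ _ ENNReal.coe_ne_top]
        gcongr
        exact hP (fun z ↦ ‖K (x - z - w)‖ₑ) (hK.comp (by fun_prop)).measurable.enorm
    _ = _ := by
        simp_rw [sub_right_comm x _ w]
        rw [lintegral_sub_left_eq_self fun u ↦ ‖K u‖ₑ, ENNReal.coe_mul, mul_assoc]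

lemma enorm_sphAvgKernel_le_of_le_norm (hχ : Function.support χ ⊆ Icc (-4) 4)
    (hB : ∀ t, ‖χ t‖ₑ ≤ B) {N : ℕ} {C : ℝ} (hK : ∀ u, ‖u‖ ^ N * ‖K u‖ ≤ C)
    {x w : Euc d} (t : ℝ) (hxw : 8 ≤ ‖x - w‖) :
    ‖sphAvgKernel χ K x t w‖ₑ ≤ B * ENNReal.ofReal (C * 4 ^ N * (1 + ‖x - w‖) ^ (-N : ℝ)) := by
  have hC : 0 ≤ C := (by positivity : 0 ≤ ‖w‖ ^ N * ‖K w‖).trans (hK w)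
  by_cases ht : χ t = 0
  · simp [sphAvgKernel, ht]
  refine (enorm_sphAvgKernel_le hB K x t w).trans ?_
  gcongr
  refine (lintegral_mono_ae (g := fun _ ↦ ENNReal.ofReal (C * 4 ^ N * (1 + ‖x - w‖) ^ (-N : ℝ)))
    ?_).trans (by simp)
  filter_upwards [ae_sphereMeasure_norm_eq_one] with y hy
  have hty : ‖t • y‖ ≤ 4 := by
    rw [norm_smul, hy, mul_one]
    exact abs_le.2 (hχ ht)
  have hdist : (1 + ‖x - w‖) / 4 ≤ ‖x - t • y - w‖ := by
    have := norm_sub_norm_le (x - w) (t • y)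
    rw [sub_right_comm] at this
    linarith
  have hpos : 0 < (1 + ‖x - w‖) / 4 := by positivity
  rw [← ofReal_norm]
  refine ENNReal.ofReal_le_ofReal ?_
  calc ‖K (x - t • y - w)‖ ≤ C / ‖x - t • y - w‖ ^ N := by
        rw [le_div_iff₀' (by have := hpos.trans_le hdist; positivity)]
        exact hK _
    _ ≤ C / ((1 + ‖x - w‖) / 4) ^ N := by gcongr
    _ = _ := by
        rw [Real.rpow_neg (by positivity), Real.rpow_natCast, div_pow, div_div_eq_mul_div,
          div_eq_mul_inv]

lemma Aj_eq_kernelOp_sphAvgKernel {β₀ : ℝ → ℝ} {f : Euc d → ℂ} {j : ℕ} (hK : Continuous K)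
    (hM : ∀ u, ‖K u‖ ≤ M) (hf : Integrable f)
    (hfreq : ∀ z, freqLoc d β₀ j f z = ∫ w, K (z - w) * f w) :
    Aj d χ β₀ j f = kernelOp volume (sphAvgKernel χ K) f := by
  funext x t
  have hcont : Continuous fun z : Euc d × Euc d ↦ K (x - t • z.1 - z.2) := hK.comp (by fun_prop)
  have hint : Integrable (fun z : Euc d × Euc d ↦ K (x - t • z.1 - z.2) * f z.2)
      ((sphereMeasure d).prod volume) :=
    (hf.comp_snd _).bdd_mul hcont.aestronglyMeasurable (.of_forall fun z ↦ hM _)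
  simp_rw [Aj, sphAvg, kernelOp, sphAvgKernel, hfreq, mul_assoc, ← integral_mul_const]
  rw [integral_const_mul, integral_integral_swap hint]

end SphericalKernel

section KernelOfAj

variable {d : ℕ} {χ β₀ : ℝ → ℝ} {B : ℝ≥0}

/-- The integral kernel of `𝒜_j`. -/
def AjKernel (d : ℕ) (χ β₀ : ℝ → ℝ) (j : ℕ) : Euc d → ℝ → Euc d → ℂ :=
  sphAvgKernel χ (freqKernel (𝓕⁻ fun ξ : Euc d ↦ (β₀ ‖ξ‖ : ℂ)) j)

lemma AjKernel_eq_zero {t : ℝ} (ht : χ t = 0) (j : ℕ) (x : Euc d) :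
    AjKernel d χ β₀ j x t = 0 := by
  funext w
  simp [AjKernel, sphAvgKernel, ht]

lemma exists_norm_freqKernel_le (k : SchwartzMap (Euc d) ℂ) (j : ℕ) :
    ∃ M, ∀ u, ‖freqKernel k j u‖ ≤ M := by
  obtain ⟨C, -, hC⟩ := k.decay 0 0
  exact ⟨_, fun u ↦ by
    simpa using norm_pow_mul_norm_freqKernel_le (N := 0) (fun u ↦ by simpa using hC u) j u⟩

variable [NeZero d]

lemma Aj_eq_kernelOp_AjKernel (hβ : IsBump β₀) (χ : ℝ → ℝ) {f : Euc d → ℂ} (hf : Integrable f)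
    (j : ℕ) : Aj d χ β₀ j f = kernelOp volume (AjKernel d χ β₀ j) f := by
  have hfreq := hβ.freqLoc_eq_integral_freqKernel hf j
  obtain ⟨k, hk⟩ := hβ.exists_schwartzMap_eq_fourierInv (V := Euc d)
  obtain ⟨M, hM⟩ := exists_norm_freqKernel_le k j
  rw [AjKernel]
  rw [← hk] at hfreq ⊢
  exact Aj_eq_kernelOp_sphAvgKernel (continuous_freqKernel k.continuous j) hM hf hfreq

lemma exists_isSchurKernel_AjKernel (hβ : IsBump β₀) (hχ : Measurable χ) (hB : ∀ t, ‖χ t‖ₑ ≤ B)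
    {a : ℝ} (ha : 0 < a) :
    ∃ A : ℝ≥0, ∀ j, IsSchurKernel (volume.restrict (Ici a)) volume A (AjKernel d χ β₀ j) := by
  obtain ⟨k, hk⟩ := hβ.exists_schwartzMap_eq_fourierInv (V := Euc d)
  obtain ⟨P, hP⟩ := exists_lintegral_time_sphAvgKernel_le (d := d) ha hB
  set I := ∫⁻ u, ‖k u‖ₑ
  have hI : I ≠ ∞ := k.integrable.2.ne
  have hcont (j : ℕ) := continuous_freqKernel k.continuous j
  have hint (j : ℕ) : ∫⁻ u, ‖freqKernel k j u‖ₑ ≤ 2 * I :=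
    lintegral_enorm_freqKernel_le volume k.continuous j
  refine ⟨((B + P) * (2 * I)).toNNReal, fun j ↦ ?_⟩
  rw [AjKernel, ← hk]
  obtain ⟨M, hM⟩ := exists_norm_freqKernel_le k j
  refine ⟨measurable_sphAvgKernel hχ (hcont j), ⟨_, norm_sphAvgKernel_le hB hM⟩,
    fun x t ↦ ?_, fun x w ↦ ?_⟩
  all_goals rw [ENNReal.coe_toNNReal (by finiteness)]
  · refine (lintegral_input_sphAvgKernel_le hB (hcont j) x t).trans ?_
    gcongr
    exacts [le_self_add, hint j]
  · refine (hP _ (hcont j) x w).trans ?_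
    gcongr
    exacts [le_add_self, hint j]

lemma exists_enorm_AjKernel_le (hβ : IsBump β₀) (hχ : Function.support χ ⊆ Icc (-4) 4)
    (hB : ∀ t, ‖χ t‖ₑ ≤ B) :
    ∃ A : ℝ≥0, ∀ (j : ℕ) (x : Euc d) t w, 8 ≤ ‖x - w‖ → ‖AjKernel d χ β₀ j x t w‖ₑ ≤
      A * 2 ^ (-(j * d : ℝ)) * ENNReal.ofReal ((1 + ‖x - w‖) ^ (-(2 * d : ℕ) : ℝ)) := by
  obtain ⟨k, hk⟩ := hβ.exists_schwartzMap_eq_fourierInv (V := Euc d)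
  obtain ⟨C, hC0, hC⟩ := k.decay (2 * d) 0
  set D := C * (1 + 2 ^ (2 * d))
  refine ⟨B * (D * 4 ^ (2 * d)).toNNReal, fun j x t w hxw ↦ ?_⟩
  have hdecay (u : Euc d) : ‖u‖ ^ (2 * d) * ‖freqKernel k j u‖ ≤ D * ((2 : ℝ) ^ (j * d))⁻¹ := by
    refine (norm_pow_mul_norm_freqKernel_le (fun u ↦ by simpa using hC u) j u).trans_eq ?_
    rw [finrank_euclideanSpace_fin]
    field_simp
    ring
  have hscale : ENNReal.ofReal ((2 : ℝ) ^ (j * d))⁻¹ = 2 ^ (-(j * d : ℝ)) := by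
    rw [← zpow_natCast, ← zpow_neg, ofReal_two_zpow]
    push_cast
    rfl
  rw [AjKernel, ← hk]
  refine (enorm_sphAvgKernel_le_of_le_norm hχ hB hdecay t hxw).trans_eq ?_
  rw [← hscale, ENNReal.coe_mul, ← ENNReal.ofReal, mul_right_comm D,
    ENNReal.ofReal_mul (by positivity), ENNReal.ofReal_mul (by positivity), ← mul_assoc,
    ← mul_assoc]

end KernelOfAj

section OperatorNorm

section Homogeneity

variable {X T W : Type*} [MeasurableSpace W] {ν : Measure W} {m : X → T → W → ℂ} {f g : W → ℂ}

lemma kernelOp_congr_ae (hfg : f =ᵐ[ν] g) : kernelOp ν m f = kernelOp ν m g := by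
  funext x t
  refine integral_congr_ae ?_
  filter_upwards [hfg] with w hw
  rw [hw]

lemma kernelOp_zero : kernelOp ν m 0 = 0 := by
  funext x t
  simp [kernelOp]

lemma kernelOp_const_smul (c : ℂ) (f : W → ℂ) (x : X) :
    kernelOp ν m (c • f) x = c • kernelOp ν m f x := by
  funext t
  simp_rw [kernelOp, Pi.smul_apply, kernelOp, smul_eq_mul, mul_left_comm, integral_const_mul]

variable [MeasurableSpace X] [MeasurableSpace T] {μ : Measure X} {τ : Measure T} {p r q : ℝ}
  {B : ℝ≥0∞}

lemma hasMixedBound_of_forall_eLpNorm'_le_one (hp : 0 < p) (hr : 0 < r) (hq : 0 < q)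
    (hB : B ≠ 0) (h : ∀ f : W → ℂ, Integrable f ν → eLpNorm' f p ν ≤ 1 →
      ∫⁻ x, eLpNorm' (kernelOp ν m f x) r τ ^ q ∂μ ≤ B) :
    HasMixedBound μ τ ν m p r q B := by
  intro f hf hfi
  set N := eLpNorm' f p ν
  rcases eq_or_ne N 0 with h0 | h0
  · have hzero := kernelOp_congr_ae (m := m)
      (ae_eq_zero_of_eLpNorm'_eq_zero hp.le hf.aestronglyMeasurable h0)
    simp [hzero, kernelOp_zero, eLpNorm'_zero hr, hq]
  rcases eq_or_ne N ∞ with htop | htop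
  · simp [htop, hq, ENNReal.mul_top hB]
  set c : ℂ := ((N.toReal⁻¹ : ℝ) : ℂ)
  have hc : ‖c‖ₑ = N⁻¹ := by
    rw [← ofReal_norm, Complex.norm_real, Real.norm_of_nonneg (by positivity),
      ENNReal.ofReal_inv_of_pos (ENNReal.toReal_pos h0 htop), ENNReal.ofReal_toReal htop]
  have hscaled := h (c • f) (hfi.smul c) (by
    rw [eLpNorm'_const_smul c hp, hc, ENNReal.inv_mul_cancel h0 htop])
  simp_rw [kernelOp_const_smul, eLpNorm'_const_smul c hr, hc, ENNReal.mul_rpow_of_nonneg _ _ hq.le]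
    at hscaled
  rw [lintegral_const_mul' _ _ (by finiteness), ENNReal.inv_rpow, mul_comm, ← div_eq_mul_inv]
    at hscaled
  exact (ENNReal.div_le_iff (by simp [h0, hq.le]) (by finiteness)).1 hscaled

end Homogeneity

lemma lqNorm_nnnorm {α : Type*} [MeasurableSpace α] {μ : Measure α} {p : ℝ≥0∞} (hp : p ≠ ∞)
    (f : α → ℂ) : lqNorm p (fun t ↦ (‖f t‖₊ : ℝ≥0∞)) μ = eLpNorm' f p.toReal μ := by
  rw [lqNorm, if_neg hp]
  rfl

lemma mixedNorm_eq (d : ℕ) {q r : ℝ≥0∞} (hq : q ≠ ∞) (hr : r ≠ ∞) (F : Euc d → ℝ → ℂ) :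
    mixedNorm d q r F =
      (∫⁻ x, eLpNorm' (F x) r.toReal volume ^ q.toReal) ^ (1 / q.toReal) := by
  simp_rw [mixedNorm, lqNorm_nnnorm hr]
  rw [lqNorm, if_neg hq]

variable {d : ℕ} [NeZero d] {χ β₀ : ℝ → ℝ} {p q r C : ℝ≥0∞}

lemma exists_measurable_Aj_eq_kernelOp (hβ : IsBump β₀)
    (χ : ℝ → ℝ) (p : ℝ≥0∞) (j : ℕ) (f : Euc d → ℂ) :
    ∃ g : Euc d → ℂ, Measurable g ∧ Integrable g ∧ eLpNorm g p volume ≤ eLpNorm f p volume ∧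
      Aj d χ β₀ j f = kernelOp volume (AjKernel d χ β₀ j) g := by
  by_cases hf : Integrable f
  · have hae := hf.1.ae_eq_mk
    refine ⟨hf.1.mk f, hf.1.stronglyMeasurable_mk.measurable, hf.congr hae,
      (eLpNorm_congr_ae hae).ge, ?_⟩
    rw [Aj_eq_kernelOp_AjKernel hβ χ hf, kernelOp_congr_ae hae]
  · refine ⟨0, measurable_zero, integrable_zero _ _ _, by simp, ?_⟩
    rw [Aj_eq_zero_of_not_integrable χ hf, kernelOp_zero]

lemma hasMixedBound_AjKernel (hβ : IsBump β₀) (τ : Measure ℝ) (hτ : τ ≤ volume) (hp : p ≠ 0)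
    (hp' : p ≠ ∞) (hq : q ≠ 0) (hq' : q ≠ ∞) (hr : r ≠ 0) (hr' : r ≠ ∞) (hC : C ≠ 0) {s : ℝ}
    {j : ℕ} (h : 2 ^ (s / q.toReal) * AjOpNorm d χ β₀ j p q r ≤ C) :
    HasMixedBound volume τ volume (AjKernel d χ β₀ j) p.toReal r.toReal q.toReal
      (C ^ q.toReal * 2 ^ (-s)) := by
  have hq0 : 0 < q.toReal := ENNReal.toReal_pos hq hq'
  have h2 : (2 : ℝ≥0∞) ^ (-s) ≠ 0 := by simp
  refine hasMixedBound_of_forall_eLpNorm'_le_one (ENNReal.toReal_pos hp hp')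
    (ENNReal.toReal_pos hr hr') hq0 (mul_ne_zero (by simp [hC, hq0.le]) h2) fun f hf hf1 ↦ ?_
  rw [← eLpNorm_eq_eLpNorm' hp hp'] at hf1
  have hAj : mixedNorm d q r (Aj d χ β₀ j f) ≤ AjOpNorm d χ β₀ j p q r :=
    le_iSup₂ (f := fun f (_ : eLpNorm f p volume ≤ 1) ↦ mixedNorm d q r (Aj d χ β₀ j f)) f hf1
  rw [Aj_eq_kernelOp_AjKernel hβ χ hf, mixedNorm_eq d hq' hr'] at hAj
  set J := ∫⁻ x, eLpNorm' (kernelOp volume (AjKernel d χ β₀ j) f x) r.toReal volume ^ q.toReal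
  have hJ : 2 ^ s * J ≤ C ^ q.toReal := by
    have := ENNReal.rpow_le_rpow ((mul_le_mul_right hAj _).trans h) hq0.le
    rwa [ENNReal.mul_rpow_of_nonneg _ _ hq0.le, ← ENNReal.rpow_mul, ← ENNReal.rpow_mul,
      div_mul_cancel₀ _ hq0.ne', one_div_mul_cancel hq0.ne', ENNReal.rpow_one] at this
  calc _ ≤ J := lintegral_mono fun x ↦ by gcongr
    _ = 2 ^ (-s) * (2 ^ s * J) := by rw [← mul_assoc, ← two_rpow_add]; simp
    _ ≤ C ^ q.toReal * 2 ^ (-s) := by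
        rw [mul_comm]
        gcongr

end OperatorNorm

section Exponents

lemma rpow_rpow_one_div_le {x : ℝ≥0∞} {a b : ℝ} (hx : 1 ≤ x) (hb : 0 < b) (hab : a ≤ b) :
    (x ^ a) ^ (1 / b) ≤ x := by
  rw [← ENNReal.rpow_mul, mul_one_div]
  simpa using ENNReal.rpow_le_rpow_of_exponent_le hx ((div_le_one hb).2 hab)

lemma exists_exponent_between {a b p r : ℝ} (hb : 0 < b) (hba : b < a) (ha : a ≤ 1) (hp : 0 < p)
    (hr : 0 < r) (hpa : p⁻¹ < a) (hrp : b < p⁻¹ → r ≤ p) (hrb : p⁻¹ ≤ b → b < r⁻¹) :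
    ∃ ρ, 1 ≤ ρ ∧ r ≤ ρ ∧ ρ ≤ p ∧ ρ⁻¹ < a ∧ b < ρ⁻¹ := by
  rcases lt_or_ge b p⁻¹ with h | h
  · exact ⟨p, (inv_le_one₀ hp).1 (hpa.le.trans ha), hrp h, le_rfl, hpa, h⟩
  · obtain ⟨s, hbs, hs⟩ := exists_between (lt_min hba (hrb h))
    obtain ⟨hsa, hsr⟩ := lt_min_iff.1 hs
    have hs0 := hb.trans hbs
    exact ⟨s⁻¹, (one_le_inv₀ hs0).2 (hsa.le.trans ha), (le_inv_comm₀ hr hs0).2 hsr.le,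
      inv_le_of_inv_le₀ hp (h.trans hbs.le), by rwa [inv_inv], by rwa [inv_inv]⟩

lemma toReal_inv_of_inv_eq_one_sub {p₀ q₀ q ρ : ℝ≥0∞} (hp₀ : 1 ≤ p₀) (hq : q₀ ≤ q)
    (hρ : ρ⁻¹ = 1 - q₀ / q * (1 - p₀⁻¹)) :
    ρ⁻¹.toReal = 1 - q₀.toReal / q.toReal * (1 - 1 / p₀.toReal) := by
  have hle : q₀ / q ≤ 1 := ENNReal.div_le_of_le_mul (by rwa [one_mul])
  rw [hρ, ENNReal.toReal_sub_of_le (mul_le_one' hle tsub_le_self) ENNReal.one_ne_top,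
    ENNReal.toReal_mul, ENNReal.toReal_div,
    ENNReal.toReal_sub_of_le (ENNReal.inv_le_one.2 hp₀) ENNReal.one_ne_top, ENNReal.toReal_inv,
    ENNReal.toReal_one, one_div]

lemma toReal_inv_of_inv_eq_mul {p₀ q₀ q ρ : ℝ≥0∞} (hρ : ρ⁻¹ = q₀ / q * p₀⁻¹) :
    ρ⁻¹.toReal = q₀.toReal / q.toReal * (1 / p₀.toReal) := by
  rw [hρ, ENNReal.toReal_mul, ENNReal.toReal_div, ENNReal.toReal_inv, one_div]

lemma toReal_inv_lt_toReal_inv {x y : ℝ≥0∞} (hx : x ≠ 0) (hy : y ≠ 0) :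
    x⁻¹.toReal < y⁻¹.toReal ↔ y < x := by
  rw [ENNReal.toReal_lt_toReal (ENNReal.inv_ne_top.2 hx) (ENNReal.inv_ne_top.2 hy),
    ENNReal.inv_lt_inv]

lemma exists_time_exponent {p₀ q₀ p q r ρmin ρmax : ℝ≥0∞} (hp₀ : 1 ≤ p₀) (hp₀q₀ : p₀ ≤ q₀)
    (hq₀ : q₀ < q) (hq : q ≠ ∞) (hρmin : ρmin⁻¹ = 1 - q₀ / q * (1 - p₀⁻¹))
    (hρmax : ρmax⁻¹ = q₀ / q * p₀⁻¹) (hp : ρmin < p) (hp' : p ≠ ∞) (hr : r ≠ 0) (hr' : r ≠ ∞)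
    (hrp : p < ρmax → r ≤ p) (hrρ : ρmax ≤ p → r < ρmax) :
    ∃ ρ, 1 ≤ ρ ∧ r.toReal ≤ ρ ∧ ρ ≤ p.toReal ∧
      1 / ρ < 1 - q₀.toReal / q.toReal * (1 - 1 / p₀.toReal) ∧
      q₀.toReal / q.toReal * (1 / p₀.toReal) < 1 / ρ := by
  have hq₀' : q₀ ≠ ∞ := hq₀.ne_top
  have hp₀0 : 0 < p₀.toReal :=
    ENNReal.toReal_pos (zero_lt_one.trans_le hp₀).ne' (ne_top_of_le_ne_top hq₀' hp₀q₀)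
  have hq₀0 : 0 < q₀.toReal := hp₀0.trans_le (ENNReal.toReal_mono hq₀' hp₀q₀)
  have hqq : q₀.toReal < q.toReal := ENNReal.toReal_strict_mono hq hq₀
  have hq0 := hq₀0.trans hqq
  have hp0 : p ≠ 0 := (zero_le.trans_lt hp).ne'
  have hmin := toReal_inv_of_inv_eq_one_sub hp₀ hq₀.le hρmin
  have hmax := toReal_inv_of_inv_eq_mul hρmax
  have hmax0 : 0 < ρmax⁻¹.toReal := by rw [hmax]; positivity
  have hlt : ρmax⁻¹.toReal < ρmin⁻¹.toReal := by
    rw [hmin, hmax]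
    linarith [(div_lt_one hq0).2 hqq]
  have hle : ρmin⁻¹.toReal ≤ 1 := by
    rw [hρmin]
    exact ENNReal.toReal_mono ENNReal.one_ne_top tsub_le_self
  have hne {x : ℝ≥0∞} (hx : 0 < x⁻¹.toReal) : x ≠ 0 := by
    rintro rfl
    simp at hx
  have hρmax0 := hne hmax0
  have hρmin0 := hne (hmax0.trans hlt)
  simp_rw [← hmin, ← hmax, one_div]
  refine exists_exponent_between hmax0 hlt hle (ENNReal.toReal_pos hp0 hp')
    (ENNReal.toReal_pos hr hr') ?_ ?_ ?_
  all_goals rw [← ENNReal.toReal_inv]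
  · exact (toReal_inv_lt_toReal_inv hp0 hρmin0).2 hp
  · exact fun h ↦ ENNReal.toReal_mono hp' (hrp ((toReal_inv_lt_toReal_inv hρmax0 hp0).1 h))
  · intro h
    have hρp : ρmax ≤ p := not_lt.1 fun hlt ↦ h.not_gt ((toReal_inv_lt_toReal_inv hρmax0 hp0).2 hlt)
    rw [← ENNReal.toReal_inv]
    exact (toReal_inv_lt_toReal_inv hρmax0 hr).2 (hrρ hρp)

end Exponents

section TimeExponent

variable {X T W : Type*} [MeasurableSpace X] [MeasurableSpace T] [MeasurableSpace W]
  {μ : Measure X} {τ : Measure T} {ν : Measure W} {m : ℕ → X → T → W → ℂ} {p q d ρ r : ℝ}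
  {A : ℝ≥0} {K : ℝ≥0∞}

lemma eLpNorm'_le_of_support_subset {α : Type*} [MeasurableSpace α] {μ : Measure α} {s : Set α}
    {f : α → ℂ} (hf : Measurable f) (hfs : Function.support f ⊆ s)
    (hr : 0 < r) (hrρ : r ≤ ρ) :
    eLpNorm' f r μ ≤ eLpNorm' f ρ (μ.restrict s) * μ s ^ (1 / r - 1 / ρ) := by
  have hrestrict : eLpNorm' f r μ = eLpNorm' f r (μ.restrict s) := by
    have h0 : ENNReal.ofReal r ≠ 0 := by simpa using hr
    have := eLpNorm_restrict_eq_of_support_subset (p := ENNReal.ofReal r) (μ := μ) hfs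
    simpa [eLpNorm_eq_eLpNorm' h0, ENNReal.toReal_ofReal hr.le] using this.symm
  rw [hrestrict, ← Measure.restrict_apply_univ s]
  exact eLpNorm'_le_eLpNorm'_mul_rpow_measure_univ hr hrρ hf.aestronglyMeasurable

lemma HasSummedBound.rpow_lintegral_sumNorm_le [SFinite ν] {s : Set T}
    (hs : τ s ≠ ∞) (h : HasSummedBound μ (τ.restrict s) ν m p ρ q d K)
    (hm : ∀ j, IsSchurKernel (τ.restrict s) ν A (m j)) (hms : ∀ j x, ∀ t ∉ s, m j x t = 0)
    (hr : 0 < r) (hrρ : r ≤ ρ) (hq : 0 < q) {f : ℕ → W → ℂ} (hf : ∀ j, Measurable (f j))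
    (hfi : ∀ j, Integrable (f j) ν) :
    (∫⁻ x, sumNorm τ ν m r f x ^ q ∂μ) ^ (1 / q) ≤
      τ s ^ (1 / r - 1 / ρ) * K ^ (1 / q) * scaleSum ν p q d f ^ (1 / q) := by
  set H := τ s ^ (1 / r - 1 / ρ)
  have hq' : 0 ≤ 1 / q := by positivity
  have hH : (H ^ q) ^ (1 / q) = H := by
    rw [← ENNReal.rpow_mul, mul_one_div_cancel hq.ne', ENNReal.rpow_one]
  have hH' : H ≠ ∞ :=
    ENNReal.rpow_ne_top_of_nonneg (sub_nonneg.2 (one_div_le_one_div_of_le hr hrρ)) hs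
  have hsupp (j : ℕ) (x : X) : Function.support (kernelOp ν (m j) (f j) x) ⊆ s :=
    fun t ht ↦ by_contra fun hts ↦ ht (by simp [kernelOp, hms j x t hts])
  have hpointwise (x : X) : sumNorm τ ν m r f x ≤ H * sumNorm (τ.restrict s) ν m ρ f x := by
    rw [sumNorm, sumNorm, ← ENNReal.tsum_mul_left]
    refine ENNReal.tsum_le_tsum fun j ↦ ?_
    rw [mul_comm]
    exact eLpNorm'_le_of_support_subset ((hm j).measurable_kernelOp_time (hf j) x) (hsupp j x)
      hr hrρ
  calc _ ≤ (∫⁻ x, H ^ q * sumNorm (τ.restrict s) ν m ρ f x ^ q ∂μ) ^ (1 / q) := by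
        gcongr with x
        rw [← ENNReal.mul_rpow_of_nonneg _ _ hq.le]
        gcongr
        exact hpointwise x
    _ = H * (∫⁻ x, sumNorm (τ.restrict s) ν m ρ f x ^ q ∂μ) ^ (1 / q) := by
        rw [lintegral_const_mul' _ _ (ENNReal.rpow_ne_top_of_nonneg hq.le hH'),
          ENNReal.mul_rpow_of_nonneg _ _ hq', hH]
    _ ≤ H * (K * scaleSum ν p q d f) ^ (1 / q) := by
        gcongr
        exact h f hf hfi
    _ = _ := by rw [ENNReal.mul_rpow_of_nonneg _ _ hq', mul_assoc]

end TimeExponent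

section MultiScale

lemma lintegral_ofReal_one_add_norm_rpow_ne_top (d : ℕ) [NeZero d] :
    ∫⁻ u : Euc d, ENNReal.ofReal ((1 + ‖u‖) ^ (-(2 * d : ℕ) : ℝ)) ≠ ∞ := by
  refine (finite_integral_one_add_norm ?_).ne
  rw [finrank_euclideanSpace_fin]
  have := NeZero.pos d
  norm_cast
  omega

lemma exists_hasSummedBound_AjKernel {d : ℕ} [NeZero d] {χ β₀ : ℝ → ℝ} {B : ℝ≥0}
    {p₀ q₀ p q ρ : ℝ} (hβ : IsBump β₀) (hχ : Measurable χ)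
    (hχ' : Function.support χ ⊆ Icc (-4) 4) (hB : ∀ t, ‖χ t‖ₑ ≤ B) {a b : ℝ} (ha : 0 < a)
    (hp₀ : 1 ≤ p₀) (hp₀q₀ : p₀ ≤ q₀) (hq₀q : q₀ < q) (hρ : 1 ≤ ρ) (hρp : ρ ≤ p) (hpq : p ≤ q)
    (hmin : 1 / ρ < 1 - q₀ / q * (1 - 1 / p₀)) (hmax : q₀ / q * (1 / p₀) < 1 / ρ) :
    ∃ K : ℝ≥0, ∀ N : ℝ≥0∞, 1 ≤ N →
      (∀ j : ℕ, HasMixedBound volume (volume.restrict (Icc a b)) volume (AjKernel d χ β₀ j)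
        p₀ p₀ q₀ (N * 2 ^ (-(j * d : ℝ)))) →
      HasSummedBound volume (volume.restrict (Icc a b)) volume (AjKernel d χ β₀) p ρ q d
        (K * N) := by
  have hd : (0 : ℝ) < d := mod_cast NeZero.pos d
  obtain ⟨A₁, hA₁⟩ := exists_isSchurKernel_AjKernel (d := d) hβ hχ hB ha
  obtain ⟨A₂, hA₂⟩ := exists_enorm_AjKernel_le (d := d) hβ hχ' hB
  have hschur (j : ℕ) :
      IsSchurKernel (volume.restrict (Icc a b)) volume (A₁ + A₂) (AjKernel d χ β₀ j) :=
    (hA₁ j).mono (Measure.restrict_mono Icc_subset_Ici_self le_rfl) le_self_add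
  obtain ⟨K, hK⟩ := exists_hasSummedBound (volume : Measure (Euc d)) (volume.restrict (Icc a b))
    (volume : Measure (Euc d)) hp₀ hp₀q₀ hq₀q hd hmin hmax (A₁ + A₂)
  have hweight (u : Euc d) : ENNReal.ofReal ((1 + ‖u‖) ^ (-(2 * d : ℕ) : ℝ)) ≤ 1 :=
    ENNReal.ofReal_le_one.2
      (Real.rpow_le_one_of_one_le_of_nonpos (by linarith [norm_nonneg u]) (by simp))
  obtain ⟨K', hK'⟩ := exists_hasSummedBound_of_le (volume : Measure (Euc d))
    (volume.restrict (Icc a b)) (A₁ + A₂) 8 (by fun_prop) hweight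
    (lintegral_ofReal_one_add_norm_rpow_ne_top d) hρ hρp hpq hd
  refine ⟨K' * (1 + K), fun N hN hmixed ↦ ?_⟩
  refine (hK' _ hschur (fun j x t w hxw ↦ (hA₂ j x t w hxw).trans ?_) _
    (hK _ hschur N hmixed)).mono ?_
  · gcongr
    exact le_add_self
  · push_cast
    rw [mul_assoc, add_mul, one_mul]
    gcongr

lemma HasSummedBound.lqNorm_tsum_lqNorm_Aj_le {d : ℕ} [NeZero d] {χ β₀ : ℝ → ℝ} {B : ℝ≥0}
    {p q r K : ℝ≥0∞} {ρ : ℝ}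
    (h : HasSummedBound volume (volume.restrict (Icc (1 / 2) 4)) volume (AjKernel d χ β₀)
      p.toReal ρ q.toReal d K) (hβ : IsBump β₀) (hχ : Measurable χ)
    (hχ' : Function.support χ ⊆ Icc (1 / 2) 4) (hB : ∀ t, ‖χ t‖ₑ ≤ B) (hp : p ≠ 0) (hp' : p ≠ ∞)
    (hq : q ≠ 0) (hq' : q ≠ ∞) (hr : r ≠ 0) (hr' : r ≠ ∞) (hrρ : r.toReal ≤ ρ)
    (F : ℕ → Euc d → ℂ) :
    lqNorm q (fun x ↦ ∑' j : ℕ, lqNorm r (fun t ↦ (‖Aj d χ β₀ j (F j) x t‖₊ : ℝ≥0∞)) volume)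
        volume ≤
      volume (Icc (1 / 2 : ℝ) 4) ^ (1 / r.toReal - 1 / ρ) * K ^ (1 / q.toReal) *
        (∑' j : ℕ, 2 ^ (-((j : ℝ) * d)) * eLpNorm (F j) p volume ^ q.toReal) ^
          (1 / q.toReal) := by
  have hq0 := ENNReal.toReal_pos hq hq'
  choose f hf hfi hfF hAj using fun j ↦ exists_measurable_Aj_eq_kernelOp hβ χ p j (F j)
  obtain ⟨A, hA⟩ := exists_isSchurKernel_AjKernel (d := d) hβ hχ hB one_half_pos
  have hbound := h.rpow_lintegral_sumNorm_le (by simp)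
    (fun j ↦ (hA j).mono (Measure.restrict_mono Icc_subset_Ici_self le_rfl) le_rfl)
    (fun j x t ht ↦ AjKernel_eq_zero (Function.notMem_support.1 fun hχt ↦ ht (hχ' hχt)) j x)
    (ENNReal.toReal_pos hr hr') hrρ hq0 hf hfi
  simp_rw [hAj, lqNorm_nnnorm hr', lqNorm, if_neg hq']
  refine hbound.trans ?_
  gcongr
  refine ENNReal.tsum_le_tsum fun j ↦ ?_
  rw [← eLpNorm_eq_eLpNorm' hp hp']
  gcongr
  exact hfF j

theorem multi_scale_sum_bound_general (d : ℕ) [NeZero d] (χ β₀ : ℝ → ℝ) (hχ : Measurable χ)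
    (hχ' : Function.support χ ⊆ Icc (1 / 2) 4) {B : ℝ≥0} (hB : ∀ t, ‖χ t‖ₑ ≤ B)
    (hβ : IsBump β₀) (p₀ q₀ q p r ρmin ρmax : ℝ≥0∞) (hp₀ : 1 ≤ p₀) (hp₀q₀ : p₀ ≤ q₀)
    (hq₀q : q₀ < q) (hq : q ≠ ∞) (hρmin : ρmin⁻¹ = 1 - q₀ / q * (1 - p₀⁻¹))
    (hρmax : ρmax⁻¹ = q₀ / q * p₀⁻¹) (hρp : ρmin < p) (hpq : p ≤ q) (hr : 0 < r)
    (hrp : p < ρmax → r ≤ p) (hrρ : ρmax ≤ p → r < ρmax) :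
    ∃ C : ℝ≥0, ∀ C₀ : ℝ≥0,
      (∀ j : ℕ, 2 ^ ((j : ℝ) * d / q₀.toReal) * AjOpNorm d χ β₀ j p₀ q₀ p₀ ≤ C₀) →
      ∀ F : ℕ → Euc d → ℂ,
        lqNorm q (fun x ↦ ∑' j : ℕ, lqNorm r (fun t ↦ (‖Aj d χ β₀ j (F j) x t‖₊ : ℝ≥0∞)) volume)
            volume ≤
          C * (1 + C₀) *
            (∑' j : ℕ, 2 ^ (-((j : ℝ) * d)) * eLpNorm (F j) p volume ^ q.toReal) ^
              (1 / q.toReal) := by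
  have hq₀ : q₀ ≠ ∞ := hq₀q.ne_top
  have hp₀0 : p₀ ≠ 0 := (zero_lt_one.trans_le hp₀).ne'
  have hp₀' : p₀ ≠ ∞ := ne_top_of_le_ne_top hq₀ hp₀q₀
  have hq₀0 : q₀ ≠ 0 := (hp₀0.bot_lt.trans_le hp₀q₀).ne'
  have hp' : p ≠ ∞ := ne_top_of_le_ne_top hq hpq
  have hr' : r ≠ ∞ := (lt_or_ge p ρmax).elim (fun h ↦ ne_top_of_le_ne_top hp' (hrp h))
    fun h ↦ (hrρ h).ne_top
  have hqq : q₀.toReal < q.toReal := ENNReal.toReal_strict_mono hq hq₀q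
  obtain ⟨ρ, hρ1, hrρ', hρp', hmin, hmax⟩ :=
    exists_time_exponent hp₀ hp₀q₀ hq₀q hq hρmin hρmax hρp hp' hr.ne' hr' hrp hrρ
  obtain ⟨K, hK⟩ := exists_hasSummedBound_AjKernel (d := d) (b := 4) hβ hχ
    (hχ'.trans (Icc_subset_Icc_left (by norm_num))) hB one_half_pos
    (by simpa using ENNReal.toReal_mono hp₀' hp₀) (ENNReal.toReal_mono hq₀ hp₀q₀) hqq
    hρ1 hρp' (ENNReal.toReal_mono hq hpq) hmin hmax
  set H := volume (Icc (1 / 2 : ℝ) 4) ^ (1 / r.toReal - 1 / ρ)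
  have hH : H ≠ ∞ := ENNReal.rpow_ne_top_of_nonneg
    (sub_nonneg.2 (one_div_le_one_div_of_le (ENNReal.toReal_pos hr.ne' hr') hrρ')) (by simp)
  refine ⟨(H * K ^ (1 / q.toReal)).toNNReal, fun C₀ hC₀ F ↦ ?_⟩
  have hsummed := hK ((1 + C₀) ^ q₀.toReal)
    (ENNReal.one_le_rpow le_self_add (ENNReal.toReal_pos hq₀0 hq₀)) fun j ↦
      hasMixedBound_AjKernel hβ _ Measure.restrict_le_self hp₀0 hp₀' hq₀0 hq₀ hp₀0 hp₀'
        (by simp) ((hC₀ j).trans le_add_self)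
  refine (hsummed.lqNorm_tsum_lqNorm_Aj_le hβ hχ hχ' hB (zero_le.trans_lt hρp).ne' hp'
    (zero_le.trans_lt hq₀q).ne' hq hr.ne' hr' hrρ' F).trans ?_
  rw [ENNReal.coe_toNNReal (by finiteness), ENNReal.mul_rpow_of_nonneg _ _ (by positivity),
    ← mul_assoc]
  gcongr
  exact rpow_rpow_one_div_le le_self_add (ENNReal.toReal_nonneg.trans_lt hqq) hqq.le

lemma IsCutoff.exists_enorm_le {χ : ℝ → ℝ} (hχ : IsCutoff χ) : ∃ B : ℝ≥0, ∀ t, ‖χ t‖ₑ ≤ B := by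
  have hcpt : HasCompactSupport χ :=
    HasCompactSupport.of_support_subset_isCompact isCompact_Icc hχ.2.2
  obtain ⟨C, hC⟩ := hcpt.exists_bound_of_continuous hχ.1.continuous
  exact ⟨C.toNNReal, fun t ↦ by
    rw [← ofReal_norm]
    exact ENNReal.ofReal_le_ofReal (hC t)⟩

end MultiScale

/-- Proposition 6.1: under the hypothesis
`sup_j 2^{jd/q₀} ‖𝒜_j‖_{L^{p₀} → L^{q₀}(L^{p₀})} ≤ C₀ < ∞`, for `q₀ < q < ∞`,
`ρ_min(q) < p ≤ q`, and `r ≤ p` if `p < ρ_max(q)`, `r < ρ_max(q)` if `ρ_max(q) ≤ p`,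
one has `‖Σ_j ‖𝒜_j f_j‖_{L^r(ℝ)}‖_{L^q(ℝ^d)} ≤ C(p,q)(1+C₀)(Σ_j 2^{-jd}‖f_j‖_p^q)^{1/q}`
for all sequences `{f_j}`. -/
theorem multi_scale_sum_bound (d : ℕ) (hd : 2 ≤ d) (χ β₀ : ℝ → ℝ)
    (hχ : IsCutoff χ) (hβ : IsBump β₀)
    (p₀ q₀ : ℝ≥0∞) (hp₀1 : 1 < p₀) (hp₀q₀ : p₀ ≤ q₀) (hq₀ : q₀ ≠ ∞)
    (C₀ : ℝ≥0)
    (hC₀ : ∀ j : ℕ, (2 : ℝ≥0∞) ^ (((j : ℝ) * d) / q₀.toReal) *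
      AjOpNorm d χ β₀ j p₀ q₀ p₀ ≤ C₀)
    (q p r ρmin ρmax : ℝ≥0∞) (hq1 : q₀ < q) (hq2 : q ≠ ∞)
    (hρmin : ρmin⁻¹ = 1 - (q₀ / q) * (1 - p₀⁻¹))
    (hρmax : ρmax⁻¹ = (q₀ / q) * p₀⁻¹)
    (hp1 : ρmin < p) (hp2 : p ≤ q) (hr0 : 0 < r)
    (hr1 : p < ρmax → r ≤ p) (hr2 : ρmax ≤ p → r < ρmax) :
    ∃ C : ℝ≥0, ∀ F : ℕ → Euc d → ℂ,
      lqNorm q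
          (fun x => ∑' j : ℕ,
            lqNorm r (fun t => (‖Aj d χ β₀ j (F j) x t‖₊ : ℝ≥0∞)) volume)
          volume ≤
        C * (1 + C₀) *
          (∑' j : ℕ, (2 : ℝ≥0∞) ^ (-((j : ℝ) * d)) *
            eLpNorm (F j) p volume ^ q.toReal) ^ (1 / q.toReal) := by
  have : NeZero d := ⟨by omega⟩
  obtain ⟨B, hB⟩ := hχ.exists_enorm_le
  obtain ⟨C, hC⟩ := multi_scale_sum_bound_general d χ β₀ hχ.1.continuous.measurable hχ.2.2 hB hβ
    p₀ q₀ q p r ρmin ρmax hp₀1.le hp₀q₀ hq1 hq2 hρmin hρmax hp1 hp2 hr0 hr1 hr2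
  exact ⟨C, hC C₀ hC₀⟩
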